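/- Let S = x^32 - 3x^31 - 124x^30 + 651x^29 + 5797x^28 - 44020x^27 - 46593x^26 + 1523309x^25 - 4960682x^24 - 28562129x^23 + 205283395x^22 + 345367838x^21 - 3865963779x^20 - 5281917640x^19 + 35629245810x^18 + 95827452774x^17 + 227525150938x^16 - 1735983387875x^15 - 9952753525850x^14 + 15867354189588x^13 + 146446287180279x^12 - 99789981007214x^11 - 1135328992145553x^10 - 171825071648506x^9 + 7446294546204081x^8 + 294530833190147x^7 - 24397472702475140x^6 - 9976638213111902x^5 + 61714590456038129x^4 + 16902762581347117x^3 - 13833080015551423x^2 - 202960986205176103x + 187532019539254309 ∈ ℚ[x]. The Galois group of S over ℚ (i.e., the Galois group of its splitting field over ℚ) is isomorphic to PGL₂(F₃₁). -/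

import Mathlib

open Polynomial Matrix

noncomputable def S : Polynomial ℚ :=
  X^32 - 3*X^31 - 124*X^30 + 651*X^29 + 5797*X^28 - 44020*X^27 - 46593*X^26 + 1523309*X^25 - 4960682*X^24 - 28562129*X^23 + 205283395*X^22 + 345367838*X^21 - 3865963779*X^20 - 5281917640*X^19 + 35629245810*X^18 + 95827452774*X^17 + 227525150938*X^16 - 1735983387875*X^15 - 9952753525850*X^14 + 15867354189588*X^13 + 146446287180279*X^12 - 99789981007214*X^11 - 1135328992145553*X^10 - 171825071648506*X^9 + 7446294546204081*X^8 + 294530833190147*X^7 - 24397472702475140*X^6 - 9976638213111902*X^5 + 61714590456038129*X^4 + 16902762581347117*X^3 - 13833080015551423*X^2 - 202960986205176103*X + 187532019539254309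

/-
The Galois group acts on the `32` roots of `S`, which are numbered by the projective line over
`ZMod 31`. For points of this line let `τ(a, b, c)` be the quadratic character of
`[a, b] [b, c] [c, a]`, where `[a, b]` is the determinant of homogeneous coordinates. Projective
transformations multiply `τ` by a constant, and by a theorem of Carlitz no other permutations do.

There is a polynomial `N` with small integer coefficients such that
`N(x, y, z) = √-31 * τ(a, b, c) * S'(x) * S'(y) * S'(z)` for the roots `x`, `y`, `z` numbered `a`,
`b`, `c`. Modulo a high power of a prime `p` that splits completely, `N` interpolates the right-hand
side. In characteristic zero the square of the equation does not involve `τ`: its two sides differ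
by an algebraic integer which is divisible by the power of `p` and has small conjugates, so they
are equal, and reduction modulo `p` determines the sign. Applying a Galois automorphism shows that
it multiplies `τ` by a constant, so the Galois group embeds into `PGL₂(F₃₁)`.

The image is everything: no root is rational, as `S` has no root modulo `2`, and the Frobenius at
`109` has order `31`, so the action is doubly transitive; the Frobenius at `17` has order `30` and
fixes two points, so the stabilizer of these points is as large as possible.
-/

section

open Finset OnePoint NumberField

section ProjectiveLine

variable {F : Type*} [Field F]

/-- The vector representing a point of the projective line in the identification
`OnePoint.equivProjectivization`. -/
def homogeneousCoords (a : OnePoint F) : Fin 2 → F :=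
  a.elim ![1, 0] fun t => ![t, 1]

/-- The determinant `[a, b]` of the homogeneous coordinates of two points of the projective line:
`[x, y] = x - y` for affine points, and `[∞, x] = 1 = -[x, ∞]`. -/
def bracket (a b : OnePoint F) : F :=
  (of ![homogeneousCoords a, homogeneousCoords b]).det

theorem bracket_eq (a b : OnePoint F) : bracket a b =
    homogeneousCoords a 0 * homogeneousCoords b 1 -
      homogeneousCoords a 1 * homogeneousCoords b 0 :=
  det_fin_two_of _ _ _ _

theorem bracket_eq_zero_iff {a b : OnePoint F} : bracket a b = 0 ↔ a = b := by
  cases a <;> cases b <;> simp [bracket_eq, homogeneousCoords, sub_eq_zero]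

variable [DecidableEq F]

theorem exists_mulVec_homogeneousCoords (g : GL (Fin 2) F) (a : OnePoint F) :
    ∃ l : F, l ≠ 0 ∧ g.1 *ᵥ homogeneousCoords a = l • homogeneousCoords (g • a) := by
  have ne_zero (a : OnePoint F) : homogeneousCoords a ≠ 0 := by
    cases a <;> simp [homogeneousCoords]
  have proj (a : OnePoint F) : equivProjectivization F a =
      Projectivization.mk F (homogeneousCoords a) (ne_zero a) := by
    cases a <;> rfl
  have h := equivProjectivization_smul (g := g) a
  rw [proj, proj, Projectivization.smul_mk, eq_comm, Projectivization.mk_eq_mk_iff] at h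
  obtain ⟨l, hl⟩ := h
  exact ⟨l, l.ne_zero, hl.symm⟩

theorem smul_eq_of_mulVec {g : GL (Fin 2) F} {a b : OnePoint F} {l : F}
    (h : g.1 *ᵥ homogeneousCoords a = l • homogeneousCoords b) : g • a = b := by
  obtain ⟨m, hm, hma⟩ := exists_mulVec_homogeneousCoords g a
  rw [hma] at h
  have : m * bracket (g • a) b = 0 := by
    have h0 := congrFun h 0
    have h1 := congrFun h 1
    simp only [Pi.smul_apply, smul_eq_mul] at h0 h1
    rw [bracket_eq]
    linear_combination homogeneousCoords b 1 * h0 - homogeneousCoords b 0 * h1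
  exact bracket_eq_zero_iff.1 ((mul_eq_zero.1 this).resolve_left hm)

theorem exists_bracket_smul (g : GL (Fin 2) F) :
    ∃ l : OnePoint F → F, (∀ a, l a ≠ 0) ∧
      ∀ a b, l a * l b * bracket (g • a) (g • b) = g.1.det * bracket a b := by
  choose l hl h using exists_mulVec_homogeneousCoords g
  refine ⟨l, hl, fun a b => ?_⟩
  have coords (a : OnePoint F) (i : Fin 2) := (congrFun (h a) i).symm
  simp only [mulVec, dotProduct, Fin.sum_univ_two, Pi.smul_apply, smul_eq_mul] at coords
  rw [bracket_eq, bracket_eq, det_fin_two]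
  linear_combination l b * homogeneousCoords (g • b) 1 * coords a 0
    + (g 0 0 * homogeneousCoords a 0 + g 0 1 * homogeneousCoords a 1) * coords b 1
    - l b * homogeneousCoords (g • b) 0 * coords a 1
    - (g 1 0 * homogeneousCoords a 0 + g 1 1 * homogeneousCoords a 1) * coords b 0

theorem exists_smul_infty_zero_one {a b c : OnePoint F} (hab : a ≠ b) (hbc : b ≠ c) (hac : a ≠ c) :
    ∃ g : GL (Fin 2) F, g • (∞ : OnePoint F) = a ∧ g • ((0 : F) : OnePoint F) = b ∧
      g • ((1 : F) : OnePoint F) = c := by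
  let A : Matrix (Fin 2) (Fin 2) F :=
    !![bracket b c * homogeneousCoords a 0, bracket c a * homogeneousCoords b 0;
      bracket b c * homogeneousCoords a 1, bracket c a * homogeneousCoords b 1]
  have hA : A.det ≠ 0 := by
    have : A.det = bracket b c * bracket c a * bracket a b := by
      rw [det_fin_two_of, bracket_eq a b]; ring
    rw [this]
    simp only [ne_eq, mul_eq_zero, bracket_eq_zero_iff, hab, hbc, hac.symm, or_self,
      not_false_eq_true]
  refine ⟨GeneralLinearGroup.mkOfDetNeZero A hA, smul_eq_of_mulVec (l := bracket b c) ?_,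
    smul_eq_of_mulVec (l := bracket c a) ?_, smul_eq_of_mulVec (l := - bracket a b) ?_⟩ <;>
  · ext i
    fin_cases i <;>
      simp [GeneralLinearGroup.mkOfDetNeZero, A, homogeneousCoords, bracket_eq] <;> ring

theorem entries_of_fixes_infty_zero {g : GL (Fin 2) F} (hinf : g • (∞ : OnePoint F) = ∞)
    (hzero : g • ((0 : F) : OnePoint F) = (0 : F)) : g 1 0 = 0 ∧ g 0 1 = 0 ∧ g 1 1 ≠ 0 := by
  have h11 : g 1 1 ≠ 0 := by
    intro h
    simp [smul_some_eq_ite, h] at hzero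
  exact ⟨smul_infty_eq_self_iff.1 hinf, by simpa [smul_some_eq_ite, h11] using hzero, h11⟩

theorem smul_coe_of_fixes_infty_zero {g : GL (Fin 2) F} (hinf : g • (∞ : OnePoint F) = ∞)
    (hzero : g • ((0 : F) : OnePoint F) = (0 : F)) (x : F) :
    g • (x : OnePoint F) = ((g 0 0 / g 1 1 * x : F) : OnePoint F) := by
  obtain ⟨h10, h01, h11⟩ := entries_of_fixes_infty_zero hinf hzero
  simp [smul_some_eq_ite, h10, h01, h11, mul_div_right_comm]

theorem smul_eq_of_fixes_infty_zero_one {g : GL (Fin 2) F} (hinf : g • (∞ : OnePoint F) = ∞)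
    (hzero : g • ((0 : F) : OnePoint F) = (0 : F)) (hone : g • ((1 : F) : OnePoint F) = (1 : F))
    (a : OnePoint F) : g • a = a := by
  rw [smul_coe_of_fixes_infty_zero hinf hzero, mul_one, coe_eq_coe] at hone
  cases a with
  | infty => exact hinf
  | coe x => rw [smul_coe_of_fixes_infty_zero hinf hzero, hone, one_mul]

theorem smul_eq_of_fixes_three {g : GL (Fin 2) F} {a b c : OnePoint F} (hab : a ≠ b) (hbc : b ≠ c)
    (hac : a ≠ c) (ha : g • a = a) (hb : g • b = b) (hc : g • c = c) (x : OnePoint F) :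
    g • x = x := by
  obtain ⟨k, rfl, rfl, rfl⟩ := exists_smul_infty_zero_one hab hbc hac
  have conj_fixes {y : OnePoint F} (h : g • k • y = k • y) : (k⁻¹ * g * k) • y = y := by
    rw [mul_smul, mul_smul, h, inv_smul_smul]
  have h := smul_eq_of_fixes_infty_zero_one (conj_fixes ha) (conj_fixes hb) (conj_fixes hc)
    (k⁻¹ • x)
  rwa [mul_smul, mul_smul, smul_inv_smul, inv_smul_eq_iff, smul_inv_smul] at h

theorem ker_toPermHom_onePoint :
    (MulAction.toPermHom (GL (Fin 2) F) (OnePoint F)).ker = Subgroup.center (GL (Fin 2) F) := by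
  ext g
  rw [GeneralLinearGroup.mem_center_iff_val_mem_range_scalar, MonoidHom.mem_ker, Equiv.Perm.ext_iff]
  constructor
  · intro h
    have hinf : g • (∞ : OnePoint F) = ∞ := h ∞
    have hzero : g • ((0 : F) : OnePoint F) = (0 : F) := h (0 : F)
    have hone : g • ((1 : F) : OnePoint F) = (1 : F) := h (1 : F)
    obtain ⟨h10, h01, h11⟩ := entries_of_fixes_infty_zero hinf hzero
    rw [smul_coe_of_fixes_infty_zero hinf hzero, mul_one, coe_eq_coe, div_eq_one_iff_eq h11] at hone
    exact ⟨g 0 0, by ext i j; fin_cases i <;> fin_cases j <;> simp [h10, h01, hone]⟩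
  · rintro ⟨c, hc⟩ a
    refine smul_eq_of_mulVec (l := c) ?_
    rw [← hc, scalar_apply, ← smul_one_eq_diagonal, smul_mulVec, one_mulVec, Equiv.Perm.one_apply]

section TripleSign

variable [Fintype F]

/-- The quadratic character of `[a, b] [b, c] [c, a]`. -/
def tripleSign (a b c : OnePoint F) : ℤ :=
  quadraticChar F (bracket a b * bracket b c * bracket c a)

theorem tripleSign_infty (x y : F) : tripleSign ∞ (x : OnePoint F) y = quadraticChar F (y - x) := by
  rw [tripleSign]
  congr 1
  simp [bracket_eq, homogeneousCoords]

theorem tripleSign_sq {c : Fin 3 → OnePoint F} (hc : Function.Injective c) :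
    tripleSign (c 0) (c 1) (c 2) ^ 2 = 1 := by
  refine quadraticChar_sq_one ?_
  simp [bracket_eq_zero_iff, hc.eq_iff]

theorem tripleSign_eq_zero {c : Fin 3 → OnePoint F} (hc : ¬ Function.Injective c) :
    tripleSign (c 0) (c 1) (c 2) = 0 := by
  obtain ⟨s, t, hst, hne⟩ : ∃ s t, c s = c t ∧ s ≠ t := by
    simpa [Function.Injective] using hc
  rw [tripleSign, quadraticChar_eq_zero_iff]
  fin_cases s <;> fin_cases t <;> simp_all [bracket_eq_zero_iff]

theorem tripleSign_smul (g : GL (Fin 2) F) (a b c : OnePoint F) :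
    tripleSign (g • a) (g • b) (g • c) = quadraticChar F g.1.det * tripleSign a b c := by
  obtain ⟨l, hl, h⟩ := exists_bracket_smul g
  have key : (l a * l b * l c) ^ 2 *
      (bracket (g • a) (g • b) * bracket (g • b) (g • c) * bracket (g • c) (g • a)) =
      g.1.det ^ 2 * (g.1.det * (bracket a b * bracket b c * bracket c a)) := by
    linear_combination (l b * l c * bracket (g • b) (g • c)) *
      (l c * l a * bracket (g • c) (g • a)) * h a b
      + (g.1.det * bracket a b) * (l c * l a * bracket (g • c) (g • a)) * h b c
      + (g.1.det * bracket a b) * (g.1.det * bracket b c) * h c a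
  have hl_ne : l a * l b * l c ≠ 0 := mul_ne_zero (mul_ne_zero (hl a) (hl b)) (hl c)
  have := congrArg (quadraticChar F) key
  rwa [map_mul _ (_ ^ 2), quadraticChar_sq_one' hl_ne, one_mul, map_mul _ (_ ^ 2),
    quadraticChar_sq_one' g.det_ne_zero, one_mul, map_mul _ g.1.det] at this

end TripleSign

end ProjectiveLine

section CarlitzRigidity

section PowerSums
variable (F : Type*) [Field F] [Fintype F]

theorem sum_pow_card_sub_one : ∑ x : F, x ^ (Fintype.card F - 1) = -1 := by
  classical
  have hq : Fintype.card F - 1 ≠ 0 := Nat.sub_ne_zero_of_lt Fintype.one_lt_card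
  have h (x : F) : x ^ (Fintype.card F - 1) = 1 - if x = 0 then 1 else 0 := by
    split_ifs with hx
    · rw [hx, zero_pow hq, sub_self]
    · rw [FiniteField.pow_card_sub_one_eq_one x hx, sub_zero]
  simp [h]

variable {F}

theorem sum_pow_eq_ite {e : ℕ} (he : 0 < e) (he' : e < 2 * (Fintype.card F - 1)) :
    ∑ x : F, x ^ e = if e = Fintype.card F - 1 then -1 else 0 := by
  split_ifs with h
  · rw [h, sum_pow_card_sub_one]
  rcases lt_or_gt_of_ne h with hlt | hgt
  · exact FiniteField.sum_pow_lt_card_sub_one F e hlt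
  · rw [← FiniteField.sum_pow_lt_card_sub_one F (e - (Fintype.card F - 1)) (by omega)]
    refine sum_congr rfl fun x _ => ?_
    rcases eq_or_ne x 0 with rfl | hx
    · rw [zero_pow he.ne', zero_pow (by omega)]
    · rw [← one_mul (x ^ (e - _)), ← FiniteField.pow_card_sub_one_eq_one x hx, ← pow_add,
        Nat.add_sub_cancel' hgt.le]

theorem sum_pow_mul_sub_pow {m i : ℕ} (hm : Fintype.card F = 2 * m + 1) (hi : 0 < i) (him : i ≤ m)
    (x : F) : ∑ z : F, z ^ (m + i) * (x - z) ^ m = (-1) ^ (m - i + 1) * m.choose i * x ^ i := by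
  calc
    ∑ z : F, z ^ (m + i) * (x - z) ^ m
      = ∑ k ∈ range (m + 1), (-1) ^ (m - k) * m.choose k * x ^ k *
          ∑ z : F, z ^ (m + i + (m - k)) := by
        simp only [mul_sum]
        rw [sum_comm]
        refine sum_congr rfl fun z _ => ?_
        rw [sub_eq_add_neg, add_pow, mul_sum]
        refine sum_congr rfl fun k _ => ?_
        rw [neg_pow z, pow_add]
        ring
    _ = ∑ k ∈ range (m + 1), (-1) ^ (m - k) * m.choose k * x ^ k * if k = i then -1 else 0 := by
        refine sum_congr rfl fun k hk => ?_
        rw [mem_range] at hk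
        rw [sum_pow_eq_ite (by omega) (by omega)]
        congr 2
        exact propext (by omega)
    _ = (-1) ^ (m - i + 1) * m.choose i * x ^ i := by
        rw [sum_eq_single_of_mem i (mem_range.2 (by omega)) fun k _ hk => by
          rw [if_neg hk, mul_zero], if_pos rfl]
        ring

end PowerSums

variable {p : ℕ} [Fact p.Prime]

/- Carlitz's trick: expanding the power sum `∑ f(y) ^ (m + i) (f(x) - f(y)) ^ m` shows that it is a
nonzero multiple of `f(x) ^ i`, while by hypothesis it is `∑ f(y) ^ (m + i) (x - y) ^ m`. -/
theorem exists_pow_eq_eval_of_sub_pow_eq {m : ℕ} (hp : p = 2 * m + 1) {f : ZMod p → ZMod p}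
    (h : ∀ x y, (f x - f y) ^ m = (x - y) ^ m) {i : ℕ} (hi : 0 < i) (him : i ≤ m) :
    ∃ P : (ZMod p)[X], P.natDegree ≤ m ∧ ∀ x, f x ^ i = P.eval x := by
  have hinj : Function.Injective f := fun x y hxy => by
    have := h x y
    rw [hxy, sub_self, zero_pow (by omega), eq_comm] at this
    exact sub_eq_zero.1 (eq_zero_of_pow_eq_zero this)
  set c : ZMod p := (-1) ^ (m - i + 1) * m.choose i
  have hc : c ≠ 0 := by
    refine mul_ne_zero (pow_ne_zero _ (neg_ne_zero.2 one_ne_zero)) ?_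
    rw [Ne, ZMod.natCast_eq_zero_iff, ← (Fact.out : p.Prime).coprime_iff_not_dvd]
    exact Nat.Prime.coprime_choose_of_lt Fact.out (by omega) him
  refine ⟨C c⁻¹ * ∑ y, C (f y ^ (m + i)) * (X - C y) ^ m, ?_, fun x => ?_⟩
  · refine (natDegree_C_mul_le _ _).trans (natDegree_sum_le_of_forall_le _ _ fun y _ => ?_)
    exact (natDegree_C_mul_le _ _).trans <| by rw [natDegree_pow, natDegree_X_sub_C, mul_one]
  · have := sum_pow_mul_sub_pow (by rw [ZMod.card, hp]) hi him (f x)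
    rw [← (Finite.injective_iff_bijective.1 hinj).sum_comp fun z => z ^ (m + i) * (f x - z) ^ m]
      at this
    simp only [h] at this
    simp only [eval_mul, eval_finsetSum, eval_pow, eval_sub, eval_C, eval_X]
    rw [this, inv_mul_cancel_left₀ hc]

/- If `f` is a polynomial of degree `2 ≤ d ≤ m`, then some power `f ^ i` with `i ≤ m` has degree in
`(m, p)`, hence is not a polynomial of degree at most `m`. -/
theorem eq_self_of_sub_pow_eq {m : ℕ} (hm : m ≠ 0) (hp : p = 2 * m + 1) {f : ZMod p → ZMod p}
    (h : ∀ x y, (f x - f y) ^ m = (x - y) ^ m) (h0 : f 0 = 0) (h1 : f 1 = 1) (x : ZMod p) :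
    f x = x := by
  obtain ⟨P, hPm, hP⟩ := exists_pow_eq_eval_of_sub_pow_eq hp h one_pos (Nat.one_le_iff_ne_zero.2 hm)
  simp only [pow_one] at hP
  have hP1 : P.natDegree ≤ 1 := by
    by_contra! hd
    have hdiv : P.natDegree * (m / P.natDegree) ≤ m := Nat.mul_div_le m _
    have hlt : m < P.natDegree * (m / P.natDegree + 1) := Nat.lt_mul_div_succ m (by omega)
    have hi : m / P.natDegree + 1 ≤ m := Nat.div_lt_self (by omega) hd
    obtain ⟨Q, hQm, hQ⟩ := exists_pow_eq_eval_of_sub_pow_eq hp h (Nat.succ_pos _) hi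
    have hdeg : (P ^ (m / P.natDegree + 1)).natDegree = P.natDegree * (m / P.natDegree + 1) := by
      rw [natDegree_pow, mul_comm]
    have hPQ : P ^ (m / P.natDegree + 1) = Q := by
      refine eq_of_natDegree_lt_card_of_eval_eq _ _ Function.injective_id (fun y => ?_) ?_
      · rw [id_eq, eval_pow, ← hP, hQ]
      · rw [hdeg, ZMod.card, mul_add]
        omega
    rw [hPQ] at hdeg
    omega
  rw [eq_X_add_C_of_natDegree_le_one hP1] at hP
  simp only [eval_add, eval_mul, eval_C, eval_X] at hP
  have e0 := hP 0
  have e1 := hP 1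
  rw [h0, mul_zero, zero_add] at e0
  rw [h1, ← e0, mul_one, add_zero] at e1
  rw [hP, ← e0, ← e1, one_mul, add_zero]

theorem eq_self_of_quadraticChar_sub_eq (hp : p ≠ 2) {f : ZMod p → ZMod p}
    (h : ∀ x y, quadraticChar (ZMod p) (f x - f y) = quadraticChar (ZMod p) (x - y))
    (h0 : f 0 = 0) (h1 : f 1 = 1) (x : ZMod p) : f x = x := by
  have hp' : ringChar (ZMod p) ≠ 2 := by rwa [ZMod.ringChar_zmod_n]
  obtain ⟨m, hm⟩ := (Fact.out : p.Prime).odd_of_ne_two hp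
  have hcard : Fintype.card (ZMod p) / 2 = m := by rw [ZMod.card]; omega
  have := (Fact.out : p.Prime).one_lt
  refine eq_self_of_sub_pow_eq (by omega) hm (fun x y => ?_) h0 h1 x
  rw [← hcard, ← quadraticChar_eq_pow_of_char_ne_two' hp', h,
    quadraticChar_eq_pow_of_char_ne_two' hp']

end CarlitzRigidity

section TripleSignRigidity

variable {p : ℕ} [Fact p.Prime]

theorem exists_smul_eq_of_tripleSign_comp (hp : p ≠ 2) (σ : Equiv.Perm (OnePoint (ZMod p))) (κ : ℤ)
    (hσ : ∀ a b c, tripleSign (σ a) (σ b) (σ c) = κ * tripleSign a b c) :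
    ∃ g : GL (Fin 2) (ZMod p), ∀ a, g • a = σ a := by
  obtain ⟨g, hinf, hzero, hone⟩ := exists_smul_infty_zero_one (a := σ ∞) (b := σ (0 : ZMod p))
    (c := σ (1 : ZMod p)) (by simp) (by simp) (by simp)
  have hτ (a b c) : tripleSign (g⁻¹ • σ a) (g⁻¹ • σ b) (g⁻¹ • σ c) = tripleSign a b c := by
    have h (a b c) := (tripleSign_smul g⁻¹ (σ a) (σ b) (σ c)).trans (congrArg _ (hσ a b c))
    have h1 := h ∞ (0 : ZMod p) (1 : ZMod p)
    rw [← hinf, ← hzero, ← hone, inv_smul_smul, inv_smul_smul, inv_smul_smul, tripleSign_infty,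
      sub_zero, map_one, mul_one] at h1
    rw [h, ← mul_assoc, ← h1, one_mul]
  have hτ_inf : g⁻¹ • σ ∞ = ∞ := by rw [← hinf, inv_smul_smul]
  have hτ_coe (x : ZMod p) : ∃ y : ZMod p, (y : OnePoint (ZMod p)) = g⁻¹ • σ x := by
    rw [← ne_infty_iff_exists, ← hτ_inf]
    simp
  choose f hf using hτ_coe
  have hf_eq (x : ZMod p) : f x = x := by
    refine eq_self_of_quadraticChar_sub_eq hp (fun x y => ?_) ?_ ?_ x
    · rw [← tripleSign_infty, ← tripleSign_infty, ← hτ ∞ y x, hτ_inf, hf, hf]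
    · rw [← coe_eq_coe, hf, ← hzero, inv_smul_smul]
    · rw [← coe_eq_coe, hf, ← hone, inv_smul_smul]
  refine ⟨g, fun a => ?_⟩
  rw [← eq_inv_smul_iff]
  cases a with
  | infty => exact hτ_inf.symm
  | coe x => rw [← hf, hf_eq]

end TripleSignRigidity

section PermutationGroups

variable {α : Type*} [Fintype α] {p : ℕ} {G R : Subgroup (Equiv.Perm α)}

theorem exists_fixed_of_prime_order (hp : p.Prime) (hcard : Fintype.card α = p + 1)
    {u : Equiv.Perm α} (hu : orderOf u = p) :
    ∃ o, u o = o ∧ ∀ x y, x ≠ o → y ≠ o → ∃ k : ℤ, (u ^ k) x = y := by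
  classical
  have hcycle : u.IsCycle := Equiv.Perm.isCycle_of_prime_order (hu ▸ hp) <| by
    rw [hu]
    exact (card_le_univ _).trans_lt (by rw [hcard]; linarith [hp.two_le])
  have hsupport : #u.supportᶜ = 1 := by
    rw [card_compl, hcard, ← hcycle.orderOf, hu, Nat.add_sub_cancel_left]
  obtain ⟨o, ho⟩ := card_eq_one.1 hsupport
  have fixed_iff (x : α) : u x = x ↔ x = o := by
    simpa using Finset.ext_iff.1 ho x
  exact ⟨o, (fixed_iff o).2 rfl, fun x y hx hy =>
    hcycle.exists_zpow_eq (mt (fixed_iff x).1 hx) (mt (fixed_iff y).1 hy)⟩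

theorem isTwoPretransitive_of_prime_order (hp : p.Prime) (hcard : Fintype.card α = p + 1)
    (hfix : ∀ a, ∃ g ∈ G, g a ≠ a) {u : Equiv.Perm α} (hu : u ∈ G) (hup : orderOf u = p) :
    MulAction.IsMultiplyPretransitive G α 2 := by
  obtain ⟨o, ho, hu_trans⟩ := exists_fixed_of_prime_order hp hcard hup
  have exists_map_to_o (x : α) : ∃ g ∈ G, g x = o := by
    obtain ⟨g, hg, hgo⟩ := hfix o
    by_cases hx : x = o
    · exact ⟨1, G.one_mem, hx⟩
    obtain ⟨k, hk⟩ := hu_trans x (g o) hx hgo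
    exact ⟨g⁻¹ * u ^ k, G.mul_mem (G.inv_mem hg) (G.zpow_mem hu k), by simp [hk]⟩
  refine MulAction.is_two_pretransitive_iff.2 fun {a b c d} hab hcd => ?_
  obtain ⟨g, hg, rfl⟩ := exists_map_to_o a
  obtain ⟨g', hg', hc⟩ := exists_map_to_o c
  obtain ⟨k, hk⟩ := hu_trans (g b) (g' d) (by simpa using hab.symm) (by simpa [← hc] using hcd.symm)
  refine ⟨⟨g'⁻¹ * u ^ k * g,
    G.mul_mem (G.mul_mem (G.inv_mem hg') (G.zpow_mem hu k)) hg⟩, ?_, ?_⟩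
  · simp [Subgroup.smul_def, Equiv.Perm.zpow_apply_eq_self_of_apply_eq_self ho, Equiv.symm_apply_eq,
      hc]
  · simp [Subgroup.smul_def, hk]

/- Counting the images of a third point shows that the powers of `h` exhaust the stabilizer of two
points in `R`. -/
theorem mem_zpowers_of_fixes_two
    (hR : ∀ r ∈ R, ∀ a b c, a ≠ b → b ≠ c → a ≠ c → r a = a → r b = b → r c = c → r = 1)
    {h : Equiv.Perm α} (hh : h ∈ R) (hcard : Fintype.card α = orderOf h + 2) {a b : α} (hab : a ≠ b)
    (ha : h a = a) (hb : h b = b) {r : Equiv.Perm α} (hr : r ∈ R) (hra : r a = a) (hrb : r b = b) :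
    r ∈ Subgroup.zpowers h := by
  classical
  have card_compl : #({a, b} : Finset α)ᶜ = orderOf h := by
    rw [Finset.card_compl, card_pair hab, hcard, Nat.add_sub_cancel]
  obtain ⟨c, hc⟩ : (({a, b} : Finset α)ᶜ).Nonempty := card_pos.1 (card_compl ▸ orderOf_pos h)
  have apply_mem {s : Equiv.Perm α} (hsa : s a = a) (hsb : s b = b) :
      s c ∈ ({a, b} : Finset α)ᶜ := by
    have h1 : s c ≠ s a ∧ s c ≠ s b := by simpa using hc
    simpa [hsa, hsb] using h1
  have eq_of_eq {s t : Equiv.Perm α} (hs : s ∈ R) (ht : t ∈ R) (hsa : s a = a) (hsb : s b = b)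
      (hta : t a = a) (htb : t b = b) (hst : s c = t c) : s = t := by
    have hc' : c ≠ a ∧ c ≠ b := by simpa using hc
    refine (inv_mul_eq_one.1 (hR (t⁻¹ * s) (R.mul_mem (R.inv_mem ht) hs) a b c hab hc'.2.symm
      hc'.1.symm ?_ ?_ ?_)).symm <;>
    simp [Equiv.symm_apply_eq, *]
  have pow_fixes {x : α} (hx : h x = x) (i : ℕ) : (h ^ i) x = x :=
    Equiv.Perm.pow_apply_eq_self_of_apply_eq_self hx i
  have orbit : (range (orderOf h)).image (fun i => (h ^ i) c) = ({a, b} : Finset α)ᶜ := by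
    refine eq_of_subset_of_card_le
      (image_subset_iff.2 fun i _ => apply_mem (pow_fixes ha i) (pow_fixes hb i)) ?_
    rw [card_compl, card_image_of_injOn, card_range]
    intro i hi j hj hij
    rw [coe_range] at hi hj
    exact pow_injOn_Iio_orderOf hi hj (eq_of_eq (R.pow_mem hh i) (R.pow_mem hh j) (pow_fixes ha i)
      (pow_fixes hb i) (pow_fixes ha j) (pow_fixes hb j) hij)
  obtain ⟨i, -, hi⟩ := mem_image.1 (orbit ▸ apply_mem hra hrb)
  exact ⟨i, by
    simpa using eq_of_eq (R.pow_mem hh i) hr (pow_fixes ha i) (pow_fixes hb i) hra hrb hi⟩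

theorem eq_of_isTwoPretransitive_of_orderOf (hGR : G ≤ R)
    (hR : ∀ r ∈ R, ∀ a b c, a ≠ b → b ≠ c → a ≠ c → r a = a → r b = b → r c = c → r = 1)
    (hG : MulAction.IsMultiplyPretransitive G α 2) {h : Equiv.Perm α} (hh : h ∈ G)
    (hcard : Fintype.card α = orderOf h + 2) {a b : α} (hab : a ≠ b) (ha : h a = a) (hb : h b = b) :
    G = R := by
  refine le_antisymm hGR fun r hr => ?_
  obtain ⟨g, hga, hgb⟩ := MulAction.is_two_pretransitive_iff.1 hG hab (r.injective.ne hab)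
  have hmem : g.1⁻¹ * r ∈ Subgroup.zpowers h :=
    mem_zpowers_of_fixes_two hR (hGR hh) hcard hab ha hb (R.mul_mem (R.inv_mem (hGR g.2)) hr)
      (Equiv.Perm.inv_eq_iff_eq.2 hga.symm) (Equiv.Perm.inv_eq_iff_eq.2 hgb.symm)
  simpa using G.mul_mem g.2 (Subgroup.zpowers_le.2 hh hmem)

end PermutationGroups

section Interpolation

variable {B ι : Type*} [CommRing B] [Fintype ι] {w : ι → B}

theorem nodal_dvd_of_forall_eval_eq_zero (hw : Pairwise fun i j => IsUnit (w i - w j)) {Q : B[X]}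
    (hQ : ∀ i, Q.eval (w i) = 0) : Lagrange.nodal univ w ∣ Q :=
  Finset.prod_dvd_of_coprime
    (fun _ _ _ _ hij => isCoprime_X_sub_C_of_isUnit_sub (hw hij))
    fun i _ => dvd_iff_isRoot.2 (hQ i)

theorem eq_nodal_of_monic (hw : Pairwise fun i j => IsUnit (w i - w j)) {f : B[X]} (hf : f.Monic)
    (hdeg : f.natDegree = Fintype.card ι) (hroot : ∀ i, f.eval (w i) = 0) :
    f = Lagrange.nodal univ w := by
  nontriviality B
  refine eq_of_monic_of_dvd_of_natDegree_le Lagrange.nodal_monic hf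
    (nodal_dvd_of_forall_eval_eq_zero hw hroot) ?_
  rw [Lagrange.natDegree_nodal, hdeg, card_univ]

theorem nodal_divByMonic_X_sub_C [DecidableEq ι] (i : ι) :
    Lagrange.nodal univ w /ₘ (X - C (w i)) = Lagrange.nodal (univ.erase i) w := by
  rw [Lagrange.nodal_eq_mul_nodal_erase (mem_univ i),
    mul_divByMonic_cancel_left _ (monic_X_sub_C _)]

theorem aeval_eq_zero_of_forall_nodes {A σ : Type*} [CommRing A] [Algebra A B] [Finite σ]
    (hw : Pairwise fun i j => IsUnit (w i - w j)) {E : MvPolynomial σ A}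
    (hE : ∀ c : σ → ι, MvPolynomial.aeval (fun s => w (c s)) E = 0) {x : σ → B}
    (hx : ∀ s, (Lagrange.nodal univ w).eval (x s) = 0) : MvPolynomial.aeval x E = 0 := by
  classical
  cases nonempty_fintype σ
  suffices H : ∀ (T : Finset σ) (y : σ → B), (∀ s ∈ T, (Lagrange.nodal univ w).eval (y s) = 0) →
      (∀ s ∉ T, ∃ i, y s = w i) → MvPolynomial.aeval y E = 0 from
    H univ x (fun s _ => hx s) fun s hs => absurd (mem_univ s) hs
  intro T
  induction T using Finset.induction_on with
  | empty =>
    intro y _ hy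
    choose c hc using fun s => hy s (notMem_empty s)
    rw [funext hc, hE]
  | insert s T hs ih =>
    intro y hroot hnode
    let Q : B[X] := MvPolynomial.aeval (Function.update (fun t => C (y t)) s X) E
    have eval_Q (b : B) : Q.eval b = MvPolynomial.aeval (Function.update y s b) E := by
      rw [← coe_aeval_eq_eval, ← AlgHom.coe_restrictScalars' A, MvPolynomial.comp_aeval_apply]
      congr 2 with t
      rcases eq_or_ne t s with rfl | ht <;> simp [*]
    have hQ : Lagrange.nodal univ w ∣ Q := nodal_dvd_of_forall_eval_eq_zero hw fun i => by
      rw [eval_Q]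
      refine ih _ (fun t ht => ?_) fun t ht => ?_
      · rw [Function.update_of_ne (ne_of_mem_of_not_mem ht hs)]
        exact hroot t (mem_insert_of_mem ht)
      · rcases eq_or_ne t s with rfl | hts
        · exact ⟨i, Function.update_self ..⟩
        · rw [Function.update_of_ne hts]
          exact hnode t (by simp [ht, hts])
    obtain ⟨q, hq⟩ := hQ
    rw [← Function.update_eq_self s y, ← eval_Q, hq, eval_mul, hroot s (mem_insert_self s T),
      zero_mul]

end Interpolation

section IntegerPolynomials

variable {A B : Type*} [CommRing A] [CommRing B] (φ : A →+* B)

theorem map_aeval_polynomial (x : A) (f : ℤ[X]) : φ (aeval x f) = aeval (φ x) f :=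
  (aeval_algHom_apply φ.toIntAlgHom x f).symm

theorem aeval_map_eq_zero {f : ℤ[X]} {x : A} (hx : aeval x f = 0) : aeval (φ x) f = 0 := by
  rw [← map_aeval_polynomial, hx, map_zero]

theorem map_aeval_mvPolynomial {ι : Type*} (x : ι → A) (P : MvPolynomial ι ℤ) :
    φ (MvPolynomial.aeval x P) = MvPolynomial.aeval (fun i => φ (x i)) P :=
  MvPolynomial.comp_aeval_apply x φ.toIntAlgHom P

end IntegerPolynomials

section Tensor

variable {R : Type*} [CommRing R]

/-- The polynomial `∑ n i j k x ^ i y ^ j z ^ k`, summed over `i, j, k < d`, in the variables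
`x = X 0`, `y = X 1`, `z = X 2`. -/
noncomputable def tensorPoly (d : ℕ) (n : ℕ → ℕ → ℕ → ℤ) : MvPolynomial (Fin 3) ℤ :=
  ∑ i ∈ range d, ∑ j ∈ range d, ∑ k ∈ range d, .C (n i j k) * .X 0 ^ i * .X 1 ^ j * .X 2 ^ k

theorem aeval_tensorPoly (d : ℕ) (n : ℕ → ℕ → ℕ → ℤ) (x : Fin 3 → R) :
    MvPolynomial.aeval x (tensorPoly d n) = ∑ i ∈ range d, ∑ j ∈ range d, ∑ k ∈ range d,
      (n i j k : R) * x 0 ^ i * x 1 ^ j * x 2 ^ k := by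
  simp [tensorPoly]

theorem norm_aeval_tensorPoly_le {𝕜 : Type*} [NormedField 𝕜] [NormSMulClass ℤ 𝕜] {d : ℕ}
    {n : ℕ → ℕ → ℕ → ℤ} {x : Fin 3 → 𝕜} {b : ℕ} (hx : ∀ s, ‖x s‖ ≤ b) :
    ‖MvPolynomial.aeval x (tensorPoly d n)‖ ≤ (∑ i ∈ range d, ∑ j ∈ range d, ∑ k ∈ range d,
      b ^ (i + j + k) * (n i j k).natAbs : ℕ) := by
  have norm_term (i j k : ℕ) :
      ‖(n i j k : 𝕜) * x 0 ^ i * x 1 ^ j * x 2 ^ k‖ ≤ (b : ℝ) ^ (i + j + k) * (n i j k).natAbs := by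
    have hn : ‖(n i j k : 𝕜)‖ = (n i j k).natAbs := by
      rw [norm_intCast_eq_abs_mul_norm_one, norm_one, mul_one, Nat.cast_natAbs, Int.cast_abs]
    simp only [norm_mul, norm_pow, hn, pow_add]
    calc ((n i j k).natAbs : ℝ) * ‖x 0‖ ^ i * ‖x 1‖ ^ j * ‖x 2‖ ^ k
        ≤ (n i j k).natAbs * b ^ i * b ^ j * b ^ k := by gcongr <;> exact hx _
      _ = b ^ i * b ^ j * b ^ k * (n i j k).natAbs := by ring
  rw [aeval_tensorPoly]
  push_cast
  exact norm_sum_le_of_le _ fun i _ => norm_sum_le_of_le _ fun j _ => norm_sum_le_of_le _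
    fun k _ => norm_term i j k

theorem aeval_tensorPoly_of_coeff_eq {ι : Type*} [Fintype ι] {d : ℕ} {n : ℕ → ℕ → ℕ → ℤ} {r : R}
    {t : ι → ι → ι → R} {L : ι → R[X]} (hL : ∀ a, (L a).natDegree < d)
    (hn : ∀ i < d, ∀ j < d, ∀ k < d, (n i j k : R) =
      r * ∑ a, ∑ b, ∑ c, t a b c * ((L a).coeff i * ((L b).coeff j * (L c).coeff k)))
    (x : Fin 3 → R) : MvPolynomial.aeval x (tensorPoly d n) = r * ∑ a, ∑ b, ∑ c,
      t a b c * ((L a).eval (x 0) * ((L b).eval (x 1) * (L c).eval (x 2))) := by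
  rw [aeval_tensorPoly]
  have expand (i : ℕ) (hi : i ∈ range d) (j : ℕ) (hj : j ∈ range d) (k : ℕ) (hk : k ∈ range d) :
      (n i j k : R) * x 0 ^ i * x 1 ^ j * x 2 ^ k = r * ∑ a, ∑ b, ∑ c, t a b c *
        ((L a).coeff i * x 0 ^ i * ((L b).coeff j * x 1 ^ j * ((L c).coeff k * x 2 ^ k))) := by
    rw [hn i (mem_range.1 hi) j (mem_range.1 hj) k (mem_range.1 hk)]
    simp only [mul_sum, sum_mul]
    refine sum_congr rfl fun a _ => sum_congr rfl fun b _ => sum_congr rfl fun c _ => by ring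
  calc _ = ∑ i ∈ range d, ∑ j ∈ range d, ∑ k ∈ range d, r * ∑ a, ∑ b, ∑ c, t a b c *
        ((L a).coeff i * x 0 ^ i * ((L b).coeff j * x 1 ^ j * ((L c).coeff k * x 2 ^ k))) :=
      sum_congr rfl fun i hi => sum_congr rfl fun j hj => sum_congr rfl fun k hk =>
        expand i hi j hj k hk
    _ = r * ∑ a, ∑ b, ∑ c, ∑ i ∈ range d, ∑ j ∈ range d, ∑ k ∈ range d, t a b c *
        ((L a).coeff i * x 0 ^ i * ((L b).coeff j * x 1 ^ j * ((L c).coeff k * x 2 ^ k))) := by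
      simp only [← mul_sum, sum_comm (s := range d) (t := (univ : Finset ι))]
    _ = _ := by
      simp_rw [eval_eq_sum_range' (hL _), sum_mul, mul_sum]

end Tensor

section SignRelation

variable {R ι : Type*} [CommRing R] [Fintype ι] {w : ι → R}

theorem eval_nodal_divByMonic_X_sub_C [DecidableEq ι] (a b : ι) :
    (Lagrange.nodal univ w /ₘ (X - C (w a))).eval (w b) =
      if a = b then (derivative (Lagrange.nodal univ w)).eval (w b) else 0 := by
  rw [nodal_divByMonic_X_sub_C]
  split_ifs with h
  · rw [h, Lagrange.eval_nodal_derivative_eval_node_eq (mem_univ b)]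
  · exact Lagrange.eval_nodal_at_node (mem_erase.2 ⟨Ne.symm h, mem_univ b⟩)

theorem aeval_tensorPoly_nodes {f : ℤ[X]} (hf : f.map (Int.castRingHom R) = Lagrange.nodal univ w)
    {n : ℕ → ℕ → ℕ → ℤ} {r : R} {t : ι → ι → ι → ℤ}
    (hn : ∀ i < Fintype.card ι, ∀ j < Fintype.card ι, ∀ k < Fintype.card ι, (n i j k : R) =
      r * ∑ a, ∑ b, ∑ c, t a b c * ((f.map (Int.castRingHom R) /ₘ (X - C (w a))).coeff i *
        ((f.map (Int.castRingHom R) /ₘ (X - C (w b))).coeff j *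
          (f.map (Int.castRingHom R) /ₘ (X - C (w c))).coeff k))) (c : Fin 3 → ι) :
    MvPolynomial.aeval (fun s => w (c s)) (tensorPoly (Fintype.card ι) n) =
      r * t (c 0) (c 1) (c 2) * ∏ s, aeval (w (c s)) (derivative f) := by
  classical
  nontriviality R
  have hdeg (a : ι) :
      (f.map (Int.castRingHom R) /ₘ (X - C (w a))).natDegree < Fintype.card ι := by
    rw [hf, nodal_divByMonic_X_sub_C, Lagrange.natDegree_nodal, card_erase_of_mem (mem_univ a),
      card_univ]
    exact Nat.sub_lt (Fintype.card_pos_iff.2 ⟨a⟩) one_pos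
  have hderiv (a : ι) :
      (derivative (Lagrange.nodal univ w)).eval (w a) = aeval (w a) (derivative f) := by
    rw [← hf, derivative_map, eval_map, aeval_def, algebraMap_int_eq]
  rw [aeval_tensorPoly_of_coeff_eq hdeg hn, hf, Fin.prod_univ_three]
  simp only [eval_nodal_divByMonic_X_sub_C, ite_mul, zero_mul, mul_ite, mul_zero, sum_ite_eq',
    mem_univ, if_true, hderiv]
  ring

/-- The polynomial in three variables which vanishes at pairwise distinct roots `x, y, z` of `f`
exactly when `N(x, y, z) ^ 2 = e (f'(x) f'(y) f'(z)) ^ 2`. The product of the differences makes it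
vanish whenever two of the arguments agree. -/
noncomputable def signRelation (e : ℤ) (f : ℤ[X]) (N : MvPolynomial (Fin 3) ℤ) :
    MvPolynomial (Fin 3) ℤ :=
  (.X 0 - .X 1) * (.X 1 - .X 2) * (.X 2 - .X 0) *
    (N ^ 2 - .C e * (∏ s, aeval (.X s) (derivative f)) ^ 2)

theorem aeval_signRelation (e : ℤ) (f : ℤ[X]) (N : MvPolynomial (Fin 3) ℤ) (x : Fin 3 → R) :
    MvPolynomial.aeval x (signRelation e f N) = (x 0 - x 1) * (x 1 - x 2) * (x 2 - x 0) *
      (MvPolynomial.aeval x N ^ 2 - e * (∏ s, aeval (x s) (derivative f)) ^ 2) := by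
  simp [signRelation, ← aeval_algHom_apply]

theorem aeval_signRelation_eq_zero (hw : Pairwise fun i j => IsUnit (w i - w j)) {e : ℤ} {r : R}
    (hr : r ^ 2 = e) {f : ℤ[X]} (hf : f.map (Int.castRingHom R) = Lagrange.nodal univ w)
    {t : ι → ι → ι → ℤ} (ht : ∀ c : Fin 3 ↪ ι, t (c 0) (c 1) (c 2) ^ 2 = 1)
    {N : MvPolynomial (Fin 3) ℤ} (hN : ∀ c : Fin 3 → ι, MvPolynomial.aeval (fun s => w (c s)) N =
      r * t (c 0) (c 1) (c 2) * ∏ s, aeval (w (c s)) (derivative f))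
    {x : Fin 3 → R} (hx : ∀ s, aeval (x s) f = 0) :
    MvPolynomial.aeval x (signRelation e f N) = 0 := by
  refine aeval_eq_zero_of_forall_nodes hw (fun c => ?_) fun s => ?_
  · rw [aeval_signRelation]
    by_cases hc : Function.Injective c
    · have ht2 : (t (c 0) (c 1) (c 2) : R) ^ 2 = 1 := mod_cast
        congrArg (Int.cast : ℤ → R) (ht ⟨c, hc⟩)
      rw [hN, mul_pow, mul_pow, hr, ht2, mul_one, sub_self, mul_zero]
    · obtain ⟨s, s', hss', hne⟩ : ∃ s s', c s = c s' ∧ s ≠ s' := by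
        simpa [Function.Injective] using hc
      have : c 0 = c 1 ∨ c 1 = c 2 ∨ c 2 = c 0 := by
        fin_cases s <;> fin_cases s' <;> simp_all
      rcases this with h | h | h <;> simp [h]
  · rw [← hf, eval_map, ← algebraMap_int_eq, ← aeval_def, hx]

theorem norm_aeval_signRelation_le {𝕜 : Type*} [NormedField 𝕜] [NormSMulClass ℤ 𝕜] {e : ℤ}
    {f : ℤ[X]} {N : MvPolynomial (Fin 3) ℤ} {x : Fin 3 → 𝕜} {b n d : ℝ} (hx : ∀ s, ‖x s‖ ≤ b)
    (hN : ‖MvPolynomial.aeval x N‖ ≤ n) (hf : ∀ s, ‖aeval (x s) (derivative f)‖ ≤ d) :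
    ‖MvPolynomial.aeval x (signRelation e f N)‖ ≤
      (b + b) ^ 3 * (n ^ 2 + |(e : ℝ)| * (d ^ 3) ^ 2) := by
  have hsub (s t : Fin 3) : ‖x s - x t‖ ≤ b + b := norm_sub_le_of_le (hx s) (hx t)
  have hb : 0 ≤ b := (norm_nonneg _).trans (hx 0)
  have hprod : ‖∏ s, aeval (x s) (derivative f)‖ ≤ d ^ 3 := by
    calc _ ≤ ∏ _ : Fin 3, d :=
          (Finset.norm_prod_le _ _).trans (prod_le_prod (fun _ _ => norm_nonneg _) fun s _ => hf s)
      _ = d ^ 3 := by simp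
  rw [aeval_signRelation, norm_mul, norm_mul, norm_mul]
  refine mul_le_mul ?_ ((norm_sub_le _ _).trans ?_) (norm_nonneg _) (by positivity)
  · rw [pow_three, ← mul_assoc]
    gcongr <;> exact hsub _ _
  · rw [norm_mul, norm_pow, norm_pow, norm_intCast_eq_abs_mul_norm_one, norm_one, mul_one,
      Int.cast_abs]
    gcongr

end SignRelation

section RootBounds

variable {𝕜 : Type*} [NormedField 𝕜] [NormSMulClass ℤ 𝕜]

theorem norm_aeval_le_sum (f : ℤ[X]) {x : 𝕜} {b : ℝ} (hx : ‖x‖ ≤ b) :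
    ‖aeval x f‖ ≤ ∑ i ∈ range (f.natDegree + 1), |(f.coeff i : ℝ)| * b ^ i := by
  rw [aeval_eq_sum_range]
  refine norm_sum_le_of_le _ fun i _ => ?_
  rw [norm_smul, norm_pow, Int.norm_eq_abs]
  gcongr

theorem norm_le_of_aeval_eq_zero {f : ℤ[X]} (hf : f.Monic) {b : ℝ} (hb : 0 < b)
    (hlt : ∑ i ∈ range f.natDegree, |(f.coeff i : ℝ)| * b ^ i < b ^ f.natDegree) {x : 𝕜}
    (hx : aeval x f = 0) : ‖x‖ ≤ b := by
  by_contra! hxb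
  set t := ‖x‖ / b with ht
  have ht1 : 1 ≤ t := (one_le_div hb).2 hxb.le
  have hxt : ‖x‖ = b * t := by rw [ht]; field_simp
  have leading_term : x ^ f.natDegree = -∑ i ∈ range f.natDegree, f.coeff i • x ^ i := by
    rw [aeval_eq_sum_range, sum_range_succ, hf.coeff_natDegree, one_zsmul] at hx
    exact eq_neg_of_add_eq_zero_right hx
  have : ‖x‖ ^ f.natDegree < (b * t) ^ f.natDegree := calc
    ‖x‖ ^ f.natDegree = ‖∑ i ∈ range f.natDegree, f.coeff i • x ^ i‖ := by
      rw [← norm_pow, leading_term, norm_neg]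
    _ ≤ ∑ i ∈ range f.natDegree, |(f.coeff i : ℝ)| * b ^ i * t ^ f.natDegree := by
      refine norm_sum_le_of_le _ fun i hi => ?_
      rw [norm_smul, norm_pow, Int.norm_eq_abs, hxt, mul_pow, mul_assoc]
      have := pow_le_pow_right₀ ht1 (mem_range.1 hi).le
      gcongr
    _ < b ^ f.natDegree * t ^ f.natDegree := by
      rw [← sum_mul]
      gcongr
    _ = (b * t) ^ f.natDegree := (mul_pow ..).symm
  exact this.ne (by rw [hxt])

end RootBounds

section SignComparison

theorem exists_sign_of_map_eq {T A k : Type*} [CommRing A] [IsDomain A] [CharZero A] [Field k]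
    (φ : A →+* k) (g : A →+* A) {π : T → T} {u v : T → A} {τ : T → ℤ} {e : A} {ρ : k}
    (hu : ∀ t, u t ^ 2 = e * v t ^ 2) (hτ : ∀ t, τ t ^ 2 = 1)
    (hφ : ∀ t, φ (u t) = ρ * τ t * φ (v t)) (hφv : ∀ t, φ (v t) ≠ 0) (hρ : ρ ≠ 0)
    (h2 : (2 : k) ≠ 0) (hgu : ∀ t, g (u t) = u (π t)) (hgv : ∀ t, g (v t) = v (π t)) :
    ∃ κ : ℤ, ∀ t, τ (π t) = κ * τ t := by
  rcases isEmpty_or_nonempty T with hT | ⟨⟨o⟩⟩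
  · exact ⟨1, fun t => hT.elim t⟩
  have hv (t : T) : v t ≠ 0 := fun h => hφv t (by rw [h, map_zero])
  have τ_ne_zero (t : T) : (τ t : k) ≠ 0 := by
    rcases sq_eq_one_iff.1 (hτ t) with h | h <;> simp [h]
  have hu_ne (t : T) : u t ≠ 0 := fun h =>
    mul_ne_zero (mul_ne_zero hρ (τ_ne_zero t)) (hφv t) (by rw [← hφ, h, map_zero])
  -- Both sides have the same square, and `φ` rules out the wrong sign.
  have compare (t : T) : τ o * (u t * v o) = τ t * (u o * v t) := by
    have hsq : (τ o * (u t * v o)) ^ 2 = (τ t * (u o * v t)) ^ 2 := by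
      simp only [mul_pow, hu, ← Int.cast_pow, hτ]
      ring
    refine (sq_eq_sq_iff_eq_or_eq_neg.1 hsq).resolve_right fun hneg => ?_
    have hφneg := congrArg φ hneg
    simp only [map_mul, map_neg, map_intCast, hφ] at hφneg
    have : 2 * (ρ * τ o * τ t * φ (v o) * φ (v t)) = 0 := by linear_combination hφneg
    exact mul_ne_zero h2 (mul_ne_zero (mul_ne_zero (mul_ne_zero (mul_ne_zero hρ (τ_ne_zero o))
      (τ_ne_zero t)) (hφv o)) (hφv t)) this
  refine ⟨τ (π o) * τ o, fun t => ?_⟩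
  have hg := congrArg g (compare t)
  simp only [map_mul, map_intCast, hgu, hgv] at hg
  have hcancel : u o * v o * v (π t) * v (π o) ≠ 0 :=
    mul_ne_zero (mul_ne_zero (mul_ne_zero (hu_ne o) (hv o)) (hv _)) (hv _)
  have key : (τ o * τ (π t) : A) = τ (π o) * τ t := mul_right_cancel₀ hcancel <| by
    linear_combination τ o * v o ^ 2 * hg - τ o * v o * v (π o) * compare (π t) +
      τ t * v o * v (π t) * compare (π o)
  have hint : τ o * τ (π t) = τ (π o) * τ t := mod_cast key
  linear_combination τ o * hint - τ (π t) * hτ o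

end SignComparison

section NumberFields

variable {K : Type*} [Field K]

theorem exists_root_map_eq {f : ℤ[X]} (hf : f.Monic)
    (hs : (f.map (Int.castRingHom K)).Splits) {k : Type*} [CommRing k] [IsDomain k]
    (φ : 𝓞 K →+* k) {c : k} (hc : aeval c f = 0) : ∃ y : 𝓞 K, aeval y f = 0 ∧ φ y = c := by
  have integral_roots : ∀ x ∈ (f.map (Int.castRingHom K)).roots, IsIntegral ℤ x := fun x hx =>
    ⟨f, hf, by simpa [eval_map] using isRoot_of_mem_roots hx⟩
  have : CanLift K (𝓞 K) (↑) (IsIntegral ℤ) := ⟨fun x hx => ⟨⟨x, hx⟩, rfl⟩⟩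
  lift (f.map (Int.castRingHom K)).roots to Multiset (𝓞 K) using integral_roots with m hm
  have hfm : f.map (Int.castRingHom (𝓞 K)) = (m.map fun a => X - C a).prod := by
    refine map_injective (algebraMap (𝓞 K) K) RingOfIntegers.coe_injective ?_
    rw [Polynomial.map_map, RingHom.eq_intCast' (RingHom.comp _ _),
      hs.eq_prod_roots_of_monic (hf.map _), ← hm, Polynomial.map_multiset_prod, Multiset.map_map,
      Multiset.map_map]
    simp
  have hc0 : (m.map fun a => c - φ a).prod = 0 := by
    rw [← hc, aeval_def, algebraMap_int_eq, ← RingHom.eq_intCast' (φ.comp (Int.castRingHom _)),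
      ← eval_map, ← Polynomial.map_map, hfm, Polynomial.map_multiset_prod, eval_multiset_prod,
      Multiset.map_map, Multiset.map_map]
    simp
  obtain ⟨y, hy, hyc⟩ := Multiset.mem_map.1 (Multiset.prod_eq_zero_iff.1 hc0)
  refine ⟨y, ?_, (sub_eq_zero.1 hyc).symm⟩
  rw [aeval_def, algebraMap_int_eq, ← eval_map, ← IsRoot.def, ← dvd_iff_isRoot, hfm]
  exact Multiset.dvd_prod (Multiset.mem_map_of_mem _ hy)

variable [NumberField K]

theorem eq_zero_of_natCast_dvd_of_forall_norm_lt {y : 𝓞 K} {m : ℕ} (hdvd : (m : 𝓞 K) ∣ y)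
    (hlt : ∀ ψ : K →+* ℂ, ‖ψ y‖ < m) : y = 0 := by
  obtain ⟨z, rfl⟩ := hdvd
  rcases eq_or_ne z 0 with rfl | hz
  · rw [mul_zero]
  obtain ⟨ψ, hψ⟩ := exists_conjugate_one_le_norm hz
  refine absurd (hlt ψ) (not_lt.2 ?_)
  simpa using le_mul_of_one_le_right (Nat.cast_nonneg (α := ℝ) m) hψ

theorem exists_maximal_liesOver_span_prime {q : ℕ} (hq : q.Prime) :
    ∃ Q : Ideal (𝓞 K), Q.IsMaximal ∧ Q.LiesOver (Ideal.span {(q : ℤ)}) := by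
  have : (Ideal.span {(q : ℤ)}).IsMaximal :=
    PrincipalIdealRing.isMaximal_of_irreducible (Nat.prime_iff_prime_int.1 hq).irreducible
  exact Ideal.exists_maximal_ideal_liesOver_of_isIntegral _

theorem natCast_quotient_eq_zero {A : Type*} [CommRing A] {q : ℕ} (Q : Ideal A)
    [Q.LiesOver (Ideal.span {(q : ℤ)})] : (q : A ⧸ Q) = 0 := by
  have hqQ : algebraMap ℤ A q ∈ Q :=
    (Ideal.mem_of_liesOver Q (Ideal.span {(q : ℤ)}) q).1 (Ideal.mem_span_singleton_self _)
  rw [← map_natCast (Ideal.Quotient.mk Q), Ideal.Quotient.eq_zero_iff_mem]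
  simpa using hqQ

theorem exists_frobenius [IsGalois ℚ K] {q : ℕ} (hq : q.Prime) (Q : Ideal (𝓞 K)) [Q.IsMaximal]
    [Q.LiesOver (Ideal.span {(q : ℤ)})] : ∃ σ : K ≃ₐ[ℚ] K, ∀ y : 𝓞 K,
      Ideal.Quotient.mk Q (σ • y) = Ideal.Quotient.mk Q y ^ q := by
  have hne : Q ≠ ⊥ := by
    rintro rfl
    have hq0 := natCast_quotient_eq_zero (q := q) (⊥ : Ideal (𝓞 K))
    rw [← map_natCast (Ideal.Quotient.mk _), Ideal.Quotient.eq_zero_iff_mem, Ideal.mem_bot] at hq0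
    exact hq.ne_zero (mod_cast hq0)
  have : Finite (𝓞 K ⧸ Q) := Ideal.finiteQuotientOfFreeOfNeBot Q hne
  obtain ⟨σ, hσ⟩ := IsArithFrobAt.exists_of_isInvariant ℤ (K ≃ₐ[ℚ] K) Q
  refine ⟨σ, fun y => ?_⟩
  have hσy := AlgHom.IsArithFrobAt.mk_apply hσ y
  rwa [← Ideal.over_def Q (Ideal.span {(q : ℤ)}),
    Nat.card_congr (Int.quotientSpanNatEquivZMod q).toEquiv, Nat.card_zmod] at hσy

end NumberFields

section ModularArithmetic

variable {R : Type*} [CommRing R] {m : ℕ}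

theorem intCast_eq_of_modEq (hm : (m : R) = 0) {x y : ℤ} (h : x ≡ y [ZMOD m]) : (x : R) = y := by
  obtain ⟨z, hz⟩ := h.dvd
  have := congrArg (Int.cast : ℤ → R) hz
  push_cast at this
  linear_combination -this - z * hm

theorem natCast_mod_eq (hm : (m : R) = 0) (x : ℕ) : ((x % m : ℕ) : R) = x := by
  exact_mod_cast intCast_eq_of_modEq hm (Int.natCast_modEq_iff.2 (Nat.mod_modEq x m))

theorem isUnit_intCast_of_isCoprime (hm : (m : R) = 0) {x : ℤ} (hx : IsCoprime x m) :
    IsUnit (x : R) := by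
  obtain ⟨a, b, hab⟩ := hx
  have := congrArg (Int.cast : ℤ → R) hab
  push_cast at this
  exact IsUnit.of_mul_eq_one a (by linear_combination this - b * hm)

/-- The residue of an integer in `{0, …, m - 1}` (zero for `m = 0`), as a natural number, so that
the kernel can compute with it. -/
def natResidue (m : ℕ) (x : ℤ) : ℕ :=
  (x % m).toNat

theorem natCast_natResidue [NeZero m] (hm : (m : R) = 0) (x : ℤ) : (natResidue m x : R) = x := by
  rw [← Int.cast_natCast, natResidue,
    Int.toNat_of_nonneg (Int.emod_nonneg x (Nat.cast_ne_zero.2 (NeZero.ne m)))]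
  exact intCast_eq_of_modEq hm (Int.mod_modEq x m)

theorem natResidue_lt [NeZero m] (x : ℤ) : natResidue m x < m := by
  have := NeZero.pos m
  have := Int.emod_lt_of_pos x (Nat.cast_pos.2 this)
  rw [natResidue]
  lia

end ModularArithmetic

section ModularPolynomials

variable {R : Type*} [CommRing R] {m : ℕ} {f : ℤ[X]} {s : ℕ → ℕ}

/-- The value at `a` of the polynomial of degree at most `d` with coefficients `s`. -/
def evalNat (s : ℕ → ℕ) (d a : ℕ) : ℕ :=
  ∑ i ∈ range (d + 1), s i * a ^ i

theorem natCast_evalNat (hs : ∀ i, (s i : R) = f.coeff i) (a : ℕ) :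
    (evalNat s f.natDegree a : R) = aeval (a : R) f := by
  simp [evalNat, aeval_eq_sum_range, hs, zsmul_eq_mul]

/-- Newton iteration modulo `m` for the polynomial of degree at most `d` with coefficients `s`,
starting at `a` and using the constant `c` in place of the quotient `-1 / f'(a)`. -/
def hensel (m : ℕ) (s : ℕ → ℕ) (d c a : ℕ) : ℕ → ℕ
  | 0 => a
  | k + 1 => (hensel m s d c a k + c * evalNat s d (hensel m s d c a k)) % m

theorem hensel_modEq {p d c a : ℕ} (hp : p ∣ m) (ha : evalNat s d a ≡ 0 [MOD p]) (k : ℕ) :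
    hensel m s d c a k ≡ a [MOD p] := by
  induction k with
  | zero => rfl
  | succ k ih =>
    have eval_modEq : evalNat s d (hensel m s d c a k) ≡ 0 [MOD p] :=
      (Nat.ModEq.sum fun i _ => (ih.pow i).mul_left (s i)).trans ha
    calc hensel m s d c a (k + 1)
        ≡ hensel m s d c a k + c * evalNat s d (hensel m s d c a k) [MOD p] :=
          (Nat.mod_modEq _ m).of_dvd hp
      _ ≡ a + c * 0 [MOD p] := ih.add (eval_modEq.mul_left c)

/-- The coefficient of `X ^ i`, modulo `m`, in the quotient by `X - a` of the polynomial of degree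
at most `d` with coefficients `s`. -/
def quotientCoeff (m : ℕ) (s : ℕ → ℕ) (d a i : ℕ) : ℕ :=
  (∑ j ∈ Icc (i + 1) d, a ^ (j - (i + 1)) * s j) % m

theorem quotientCoeff_lt [NeZero m] (s : ℕ → ℕ) (d a i : ℕ) : quotientCoeff m s d a i < m :=
  Nat.mod_lt _ (NeZero.pos m)

theorem natCast_quotientCoeff (hm : (m : R) = 0) (hs : ∀ i, (s i : R) = f.coeff i) (a i : ℕ) :
    (quotientCoeff m s f.natDegree a i : R) =
      (f.map (Int.castRingHom R) /ₘ (X - C (a : R))).coeff i := by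
  have hmap : f.map (Int.castRingHom R) /ₘ (X - C (a : R)) =
      (f /ₘ (X - C (a : ℤ))).map (Int.castRingHom R) := by
    rw [map_divByMonic _ (monic_X_sub_C (a : ℤ))]
    simp
  rw [quotientCoeff, natCast_mod_eq hm, hmap, coeff_map, coeff_divByMonic_X_sub_C]
  simp [hs]

end ModularPolynomials

section DigitExtraction

theorem sum_mul_pow_div_pow_mod {b d k : ℕ} {c : ℕ → ℕ} (hc : ∀ i < d, c i < b) (hk : k < d) :
    (∑ i ∈ range d, c i * b ^ i) / b ^ k % b = c k := by
  have hb : 0 < b := (Nat.zero_le _).trans_lt (hc k hk)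
  induction k generalizing d c with
  | zero =>
    obtain ⟨d, rfl⟩ := Nat.exists_eq_succ_of_ne_zero hk.ne'
    rw [sum_range_succ', pow_zero, Nat.div_one, mul_one, Nat.add_mod, Nat.mod_eq_zero_of_dvd
      (dvd_sum fun i _ => dvd_mul_of_dvd_right (dvd_pow_self b i.succ_ne_zero) _), zero_add,
      Nat.mod_mod, Nat.mod_eq_of_lt (hc 0 hk)]
  | succ k ih =>
    obtain ⟨d, rfl⟩ := Nat.exists_eq_succ_of_ne_zero (Nat.zero_le _ |>.trans_lt hk).ne'
    have split : ∑ i ∈ range (d + 1), c i * b ^ i =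
        c 0 + b * ∑ i ∈ range d, c (i + 1) * b ^ i := by
      rw [sum_range_succ', mul_sum, add_comm, pow_zero, mul_one]
      simp only [pow_succ', mul_left_comm]
    rw [split, pow_succ', ← Nat.div_div_eq_div_mul, Nat.add_mul_div_left _ _ hb,
      Nat.div_eq_of_lt (hc 0 d.succ_pos), zero_add]
    exact ih (fun i hi => hc (i + 1) (by lia)) (by lia)

/-- The coefficient `∑ t a b c * L a i * L b j * L c k`, read off as a digit in base `B` of an
integer which packs these numbers for all `k`. -/
def tensorDigit (t : ℕ → ℕ → ℕ → ℕ) (L : ℕ → ℕ → ℕ) (d B i j k : ℕ) : ℕ :=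
  (∑ a ∈ range d, L a i * ∑ b ∈ range d, L b j * ∑ c ∈ range d, t a b c *
    ∑ k ∈ range d, L c k * B ^ k) / B ^ k % B

theorem tensorDigit_eq {m d B i j k : ℕ} {t : ℕ → ℕ → ℕ → ℕ} {L : ℕ → ℕ → ℕ}
    (ht : ∀ a b c, t a b c < m) (hL : ∀ a i, L a i < m) (hB : d ^ 3 * m ^ 4 < B) (hk : k < d) :
    tensorDigit t L d B i j k = ∑ a ∈ range d, ∑ b ∈ range d, ∑ c ∈ range d,
      t a b c * (L a i * (L b j * L c k)) := by
  have digit_lt (k : ℕ) : ∑ a ∈ range d, ∑ b ∈ range d, ∑ c ∈ range d,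
      t a b c * (L a i * (L b j * L c k)) < B := by
    calc _ ≤ ∑ _ ∈ range d, ∑ _ ∈ range d, ∑ _ ∈ range d, m * (m * (m * m)) := by
          gcongr with a _ b _ c _
          exacts [(ht a b c).le, (hL a i).le, (hL b j).le, (hL c k).le]
      _ = d ^ 3 * m ^ 4 := by simp; ring
      _ < B := hB
  rw [← sum_mul_pow_div_pow_mod (fun k _ => digit_lt k) hk, tensorDigit]
  congr 2
  simp only [sum_mul]
  rw [sum_comm]
  refine sum_congr rfl fun a _ => ?_
  rw [sum_comm, mul_sum]
  refine sum_congr rfl fun b _ => ?_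
  rw [sum_comm, mul_sum, mul_sum]
  refine sum_congr rfl fun c _ => ?_
  rw [mul_sum, mul_sum, mul_sum]
  exact sum_congr rfl fun k _ => by ring

/-- The coefficient of `X 0 ^ i * X 1 ^ j * X 2 ^ k` in `r * ∑ t a b c * L a * L b * L c`, where
`L a` is the quotient of the polynomial with coefficients `s` by `X - v a`, as the integer of least
absolute value modulo `m`. -/
def interpolationCoeff (m B d : ℕ) (s v : ℕ → ℕ) (r : ℕ) (t : ℕ → ℕ → ℕ → ℤ) (i j k : ℕ) : ℤ :=
  Int.bmod (tensorDigit (fun a b c => natResidue m (r * t a b c))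
    (fun a => quotientCoeff m s d (v a)) d B i j k) m

theorem intCast_interpolationCoeff {R : Type*} [CommRing R] {m : ℕ} [NeZero m] (hm : (m : R) = 0)
    {f : ℤ[X]} {s : ℕ → ℕ} (hs : ∀ i, (s i : R) = f.coeff i) {B d : ℕ} (hd : f.natDegree = d)
    (hB : d ^ 3 * m ^ 4 < B) (v : ℕ → ℕ) (r : ℕ) (t : ℕ → ℕ → ℕ → ℤ) {k : ℕ} (hk : k < d)
    (i j : ℕ) : (interpolationCoeff m B d s v r t i j k : R) =
      r * ∑ a : Fin d, ∑ b : Fin d, ∑ c : Fin d, t a b c *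
        ((f.map (Int.castRingHom R) /ₘ (X - C (v a : R))).coeff i *
          ((f.map (Int.castRingHom R) /ₘ (X - C (v b : R))).coeff j *
            (f.map (Int.castRingHom R) /ₘ (X - C (v c : R))).coeff k)) := by
  subst hd
  rw [interpolationCoeff, intCast_eq_of_modEq hm (y := _) (Int.bmod_emod ..), Int.cast_natCast,
    tensorDigit_eq (fun _ _ _ => natResidue_lt _) (fun a => quotientCoeff_lt s _ (v a)) hB hk]
  push_cast
  simp only [natCast_quotientCoeff hm hs, natCast_natResidue hm, ← Fin.sum_univ_eq_sum_range,
    mul_sum, Int.cast_mul, Int.cast_natCast, mul_assoc]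

end DigitExtraction

local instance : Fact (Nat.Prime 31) :=
  ⟨by norm_num⟩

section SignComputation

variable {p : ℕ}

/-- The numbering of the points of the projective line over `ZMod p` by `0, …, p`, where `∞` has
number `p`. -/
def pointIndex (a : OnePoint (ZMod p)) : ℕ :=
  a.elim p ZMod.val

/-- A natural number representing `bracket`, in terms of the numbering `pointIndex`. -/
def natBracket (p a b : ℕ) : ℕ :=
  if a = p then if b = p then 0 else 1 else if b = p then p - 1 else (a + (p - b)) % p

/-- The sign `tripleSign`, in terms of the numbering `pointIndex` and computed by Euler's
criterion. -/
def natTripleSign (p a b c : ℕ) : ℤ :=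
  Int.bmod ((natBracket p a b * natBracket p b c * natBracket p c a) ^ (p / 2) : ℕ) p

theorem natCast_natBracket [Fact p.Prime] (a b : OnePoint (ZMod p)) :
    (natBracket p (pointIndex a) (pointIndex b) : ZMod p) = bracket a b := by
  cases a <;> cases b <;>
    simp [natBracket, pointIndex, bracket_eq, homogeneousCoords, (ZMod.val_lt _).ne,
      (ZMod.val_lt _).le, (Fact.out : p.Prime).one_le, Nat.cast_sub, ← sub_eq_add_neg]

theorem natTripleSign_eq [Fact p.Prime] (hp : p ≠ 2) (a b c : OnePoint (ZMod p)) :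
    natTripleSign p (pointIndex a) (pointIndex b) (pointIndex c) = tripleSign a b c := by
  have hp3 : 3 ≤ p := by
    have := (Fact.out : p.Prime).two_le
    lia
  rw [natTripleSign, tripleSign]
  set x := bracket a b * bracket b c * bracket c a with hx
  have euler : (((natBracket p (pointIndex a) (pointIndex b) *
      natBracket p (pointIndex b) (pointIndex c) *
      natBracket p (pointIndex c) (pointIndex a)) ^ (p / 2) : ℕ) : ZMod p) =
        (quadraticChar (ZMod p) x : ZMod p) := by
    push_cast
    rw [natCast_natBracket, natCast_natBracket, natCast_natBracket, ← hx,
      quadraticChar_eq_pow_of_char_ne_two' (by rwa [ZMod.ringChar_zmod_n p]), ZMod.card]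
  have bmod_self : Int.bmod (quadraticChar (ZMod p) x) p = quadraticChar (ZMod p) x := by
    rcases quadraticChar_isQuadratic (ZMod p) x with h | h | h <;> rw [h] <;>
      exact Int.bmod_eq_of_le (by lia) (by lia)
  rw [← bmod_self, ← Int.emod_bmod, ← Int.emod_bmod (quadraticChar (ZMod p) x),
    (ZMod.intCast_eq_intCast_iff' _ _ p).1 (mod_cast euler)]

/-- The identification of `Fin 32` with the projective line over `ZMod 31` for which `pointIndex`
is the coercion of `Fin 32` to `ℕ`. -/
def pointEquiv : Fin 32 ≃ OnePoint (ZMod 31) :=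
  finSuccEquivLast

theorem pointIndex_pointEquiv (i : Fin 32) : pointIndex (pointEquiv i) = i := by
  revert i
  decide

end SignComputation

section Nodes

/-- The coefficients of `S`, starting with the constant one. -/
def coeffsS : List ℤ :=
  [187532019539254309, -202960986205176103, -13833080015551423, 16902762581347117,
    61714590456038129, -9976638213111902, -24397472702475140, 294530833190147, 7446294546204081,
    -171825071648506, -1135328992145553, -99789981007214, 146446287180279, 15867354189588,
    -9952753525850, -1735983387875, 227525150938, 95827452774, 35629245810, -5281917640,
    -3865963779, 345367838, 205283395, -28562129, -4960682, 1523309, -46593, -44020, 5797, 651,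
    -124, -3, 1]

/-- The polynomial `S` with coefficients in `ℤ`. -/
noncomputable def intS : ℤ[X] :=
  ∑ i ∈ range 33, C (coeffsS.getD i 0) * X ^ i

theorem map_intS : intS.map (Int.castRingHom ℚ) = S := by
  simp [intS, sum_range_succ, coeffsS, S]
  ring

theorem coeff_intS (i : ℕ) : intS.coeff i = coeffsS.getD i 0 := by
  by_cases hi : i < 33
  · simp [intS, hi]
  · simp [intS, hi, coeffsS]

theorem natDegree_intS : intS.natDegree = 32 := by
  refine natDegree_eq_of_le_of_coeff_ne_zero ?_ (by simp [coeff_intS, coeffsS])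
  refine natDegree_le_iff_coeff_eq_zero.2 fun i hi => ?_
  rw [coeff_intS, List.getD_eq_default _ _ hi]

theorem monic_intS : intS.Monic := by
  simp [Monic, leadingCoeff, natDegree_intS, coeff_intS, coeffsS]

/-- The prime `348553` splits completely in the splitting field of `S` and in `ℚ(√-31)`. -/
def splitPrime : ℕ :=
  348553

theorem prime_splitPrime : splitPrime.Prime := by
  norm_num [splitPrime]

/-- The precision of the `splitPrime`-adic computations. -/
def modulus : ℕ :=
  splitPrime ^ 44

instance : NeZero modulus :=
  ⟨pow_ne_zero _ (by decide)⟩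

/-- The coefficients of `S` modulo `modulus`. -/
def residueS (i : ℕ) : ℕ :=
  natResidue modulus (coeffsS.getD i 0)

/-- For each root `a` of `S` modulo `splitPrime` the pair of `a` and `-1 / S'(a)`. The order makes
the action of the Galois group on the roots preserve `tripleSign` up to sign. -/
def seeds : List (ℕ × ℕ) :=
  [(5506, 201022), (19552, 321327), (290836, 31971), (259475, 347958), (110912, 131981),
    (125387, 72503), (230722, 262721), (67555, 2272), (65934, 15119), (80892, 112985),
    (309410, 102132), (195304, 277098), (74210, 328679), (340389, 274782), (305604, 156359),
    (58929, 107521), (311671, 95083), (33421, 187176), (94307, 269814), (329866, 40541),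
    (40747, 331584), (218172, 188973), (239331, 158359), (212449, 13710), (97800, 8250),
    (43549, 107849), (259111, 183052), (241155, 9830), (125399, 167459), (316767, 57876),
    (122543, 156244), (1393, 157512)]

/-- The root of `S` modulo `splitPrime` attached to the point number `a`. -/
def seed (a : ℕ) : ℕ :=
  (seeds.getD a 0).1

/-- The root of `S` modulo `modulus` attached to the point number `a`. -/
@[irreducible]
def node (a : ℕ) : ℕ :=
  hensel modulus residueS 32 (seeds.getD a 0).2 (seed a) 44

/-- A square root of `-31` modulo `modulus`. -/
@[irreducible]
def sqrtNode : ℕ :=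
  hensel modulus (fun i => [31, 0, 1].getD i 0) 2 67710 15384 44

/-- The coefficients, lifted to small integers, of the polynomial in three variables with the value
`√-31 * tripleSign a b c * S'(x) * S'(y) * S'(z)` at the roots `x`, `y`, `z` numbered `a`, `b`,
`c`. -/
def signCoeff : ℕ → ℕ → ℕ → ℤ :=
  interpolationCoeff modulus (2 ^ 3300) 32 residueS node sqrtNode (natTripleSign 31)

theorem seed_injOn_mod : ∀ a ∈ range 32, ∀ b ∈ range 32,
    seed a % splitPrime = seed b % splitPrime → a = b := by
  decide +kernel

theorem evalNat_seed : ∀ a ∈ range 32, evalNat residueS 32 (seed a) % splitPrime = 0 := by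
  decide +kernel

set_option maxRecDepth 100000 in
theorem evalNat_node : ∀ a ∈ range 32, evalNat residueS 32 (node a) % modulus = 0 := by
  decide +kernel

theorem sqrtNode_sq_add_mod : (sqrtNode ^ 2 + 31) % modulus = 0 := by
  decide +kernel

set_option maxRecDepth 100000 in
theorem sum_natAbs_signCoeff_le : ∑ i ∈ range 32, ∑ j ∈ range 32, ∑ k ∈ range 32,
    16 ^ (i + j + k) * (signCoeff i j k).natAbs ≤ 2 ^ 376 := by
  decide +kernel

end Nodes

section SignPolynomial

variable {R : Type*} [CommRing R]

theorem natCast_residueS (hR : (modulus : R) = 0) (i : ℕ) : (residueS i : R) = intS.coeff i := by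
  rw [residueS, natCast_natResidue hR, coeff_intS]

theorem isCoprime_node_sub_node {a b : ℕ} (ha : a < 32) (hb : b < 32) (hab : a ≠ b) :
    IsCoprime ((node a : ℤ) - node b) modulus := by
  have hp : Prime (splitPrime : ℤ) := Nat.prime_iff_prime_int.1 prime_splitPrime
  have node_modEq {c : ℕ} (hc : c < 32) : node c ≡ seed c [MOD splitPrime] := by
    unfold node
    exact hensel_modEq (dvd_pow_self _ (by decide)) (evalNat_seed c (mem_range.2 hc)) _
  have hdvd : ¬ (splitPrime : ℤ) ∣ node a - node b := fun h => by
    have h' : node b ≡ node a [MOD splitPrime] := Nat.modEq_iff_dvd.2 h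
    exact hab (seed_injOn_mod a (mem_range.2 ha) b (mem_range.2 hb)
      ((node_modEq ha).symm.trans (h'.symm.trans (node_modEq hb))))
  rw [modulus, Nat.cast_pow]
  exact ((hp.coprime_iff_not_dvd.2 hdvd).symm).pow_right

theorem isUnit_node_sub_node (hR : (modulus : R) = 0) : Pairwise fun a b : OnePoint (ZMod 31) =>
    IsUnit ((node (pointIndex a) : R) - node (pointIndex b)) := by
  intro a b hab
  obtain ⟨i, rfl⟩ := pointEquiv.surjective a
  obtain ⟨j, rfl⟩ := pointEquiv.surjective b
  have hij : (i : ℕ) ≠ j := fun h => hab (congrArg pointEquiv (Fin.ext h))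
  rw [pointIndex_pointEquiv, pointIndex_pointEquiv]
  simpa using isUnit_intCast_of_isCoprime hR (isCoprime_node_sub_node i.2 j.2 hij)

theorem aeval_node (hR : (modulus : R) = 0) (a : OnePoint (ZMod 31)) :
    aeval (node (pointIndex a) : R) intS = 0 := by
  obtain ⟨i, rfl⟩ := pointEquiv.surjective a
  have := natCast_mod_eq hR (evalNat residueS 32 (node i))
  rw [evalNat_node i (mem_range.2 i.2), Nat.cast_zero] at this
  rw [pointIndex_pointEquiv, ← natCast_evalNat (natCast_residueS hR), natDegree_intS, ← this]

theorem map_intS_eq_nodal (hR : (modulus : R) = 0) : intS.map (Int.castRingHom R) =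
    Lagrange.nodal univ fun a : OnePoint (ZMod 31) => (node (pointIndex a) : R) := by
  nontriviality R
  refine eq_nodal_of_monic (isUnit_node_sub_node hR) (monic_intS.map _) ?_ fun a => ?_
  · rw [monic_intS.natDegree_map, natDegree_intS]
    rfl
  · rw [eval_map, ← algebraMap_int_eq, ← aeval_def, aeval_node hR]

theorem sqrtNode_sq (hR : (modulus : R) = 0) : (sqrtNode : R) ^ 2 = (-31 : ℤ) := by
  have := natCast_mod_eq hR (sqrtNode ^ 2 + 31)
  rw [sqrtNode_sq_add_mod] at this
  push_cast at this ⊢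
  linear_combination -this

/-- The polynomial with the coefficients `signCoeff`. -/
noncomputable def signPoly : MvPolynomial (Fin 3) ℤ :=
  tensorPoly 32 signCoeff

theorem aeval_signPoly_node (hR : (modulus : R) = 0) (c : Fin 3 → OnePoint (ZMod 31)) :
    MvPolynomial.aeval (fun s => (node (pointIndex (c s)) : R)) signPoly =
      sqrtNode * tripleSign (c 0) (c 1) (c 2) *
        ∏ s, aeval (node (pointIndex (c s)) : R) (derivative intS) := by
  refine aeval_tensorPoly_nodes (map_intS_eq_nodal hR) (fun i _ j _ k hk => ?_) c
  rw [signCoeff, intCast_interpolationCoeff hR (natCast_residueS hR) natDegree_intS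
    (by decide +kernel) _ _ _ hk]
  simp only [← pointEquiv.sum_comp, pointIndex_pointEquiv, ← natTripleSign_eq (p := 31) (by decide)]

end SignPolynomial

section IntegralRelation

variable {K : Type*} [Field K] [NumberField K]

theorem norm_root_intS_le {𝕜 : Type*} [NormedField 𝕜] [NormSMulClass ℤ 𝕜] {x : 𝕜}
    (hx : aeval x intS = 0) : ‖x‖ ≤ 16 := by
  refine norm_le_of_aeval_eq_zero monic_intS (by norm_num) ?_ hx
  have : ∑ i ∈ range 32, |coeffsS.getD i 0| * 16 ^ i < 16 ^ 32 := by decide +kernel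
  simp only [natDegree_intS, coeff_intS]
  exact_mod_cast this

theorem norm_derivative_intS_le {𝕜 : Type*} [NormedField 𝕜] [NormSMulClass ℤ 𝕜] {x : 𝕜}
    (hx : ‖x‖ ≤ 16) : ‖aeval x (derivative intS)‖ ≤ 2 ^ 130 := by
  refine (norm_aeval_le_sum _ hx).trans ?_
  have : ∑ i ∈ range 32, |coeffsS.getD (i + 1) 0 * (i + 1)| * 16 ^ i ≤ 2 ^ 130 := by decide +kernel
  rw [natDegree_derivative, natDegree_intS]
  simp only [coeff_derivative, coeff_intS]
  exact_mod_cast this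

theorem aeval_signRelation_intS {x : Fin 3 → 𝓞 K} (hx : ∀ s, aeval (x s) intS = 0) :
    MvPolynomial.aeval x (signRelation (-31) intS signPoly) = 0 := by
  refine eq_zero_of_natCast_dvd_of_forall_norm_lt (m := modulus) ?_ fun ψ => ?_
  · have hR : (modulus : 𝓞 K ⧸ Ideal.span {(modulus : 𝓞 K)}) = 0 := by
      rw [← map_natCast (Ideal.Quotient.mk _), Ideal.Quotient.eq_zero_iff_mem]
      exact Ideal.mem_span_singleton_self _
    rw [← Ideal.mem_span_singleton, ← Ideal.Quotient.eq_zero_iff_mem, map_aeval_mvPolynomial]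
    exact aeval_signRelation_eq_zero (isUnit_node_sub_node hR) (sqrtNode_sq hR)
      (map_intS_eq_nodal hR) (fun c => tripleSign_sq c.injective) (aeval_signPoly_node hR)
      fun s => aeval_map_eq_zero _ (hx s)
  · set χ := ψ.comp (algebraMap (𝓞 K) K)
    have hχ (s : Fin 3) : ‖χ (x s)‖ ≤ 16 := norm_root_intS_le (aeval_map_eq_zero χ (hx s))
    calc ‖χ (MvPolynomial.aeval x (signRelation (-31) intS signPoly))‖
        ≤ (16 + 16) ^ 3 * ((2 ^ 376) ^ 2 + |((-31 : ℤ) : ℝ)| * ((2 ^ 130) ^ 3) ^ 2) := by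
          rw [map_aeval_mvPolynomial]
          refine norm_aeval_signRelation_le hχ ?_ fun s => norm_derivative_intS_le (hχ s)
          refine (norm_aeval_tensorPoly_le hχ).trans ?_
          exact_mod_cast sum_natAbs_signCoeff_le
      _ < modulus := by
        have : (16 + 16) ^ 3 * ((2 ^ 376) ^ 2 + 31 * ((2 ^ 130) ^ 3) ^ 2) < modulus := by
          decide +kernel
        rw [Int.cast_neg, abs_neg, Int.cast_ofNat, Nat.abs_ofNat]
        exact_mod_cast this

end IntegralRelation

section RootNumbering

variable {k : Type*} [Field k]

theorem aeval_derivative_node_ne_zero (hk : (modulus : k) = 0) (a : OnePoint (ZMod 31)) :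
    aeval (node (pointIndex a) : k) (derivative intS) ≠ 0 := by
  classical
  rw [← eval_map_algebraMap, algebraMap_int_eq, ← derivative_map, map_intS_eq_nodal hk,
    Lagrange.eval_nodal_derivative_eval_node_eq (v := fun a => (node (pointIndex a) : k))
      (mem_univ a), Lagrange.eval_nodal, prod_ne_zero_iff]
  exact fun b hb => (isUnit_node_sub_node hk (ne_of_mem_erase hb).symm).ne_zero

theorem intCast_ne_zero_of_gcd_eq_one (hk : (modulus : k) = 0) {x : ℤ}
    (hx : x.gcd modulus = 1) : (x : k) ≠ 0 :=
  (isUnit_intCast_of_isCoprime hk (Int.isCoprime_iff_gcd_eq_one.2 hx)).ne_zero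

theorem sqrtNode_ne_zero (hk : (modulus : k) = 0) : (sqrtNode : k) ≠ 0 := by
  have h31 : Int.gcd (-31) modulus = 1 := by decide +kernel
  refine ne_zero_pow two_ne_zero ?_
  rw [sqrtNode_sq hk]
  exact intCast_ne_zero_of_gcd_eq_one hk h31

variable {K : Type*} [Field K] {φ : 𝓞 K →+* k} {r : OnePoint (ZMod 31) → 𝓞 K}

theorem injective_of_map_eq_node (hk : (modulus : k) = 0)
    (hφ : ∀ a, φ (r a) = node (pointIndex a)) : Function.Injective r := by
  intro a b hab
  by_contra hne
  refine (isUnit_node_sub_node hk hne).ne_zero ?_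
  rw [← hφ, ← hφ, hab, sub_self]

variable [NumberField K]

theorem aeval_signPoly_sq (hr : ∀ a, aeval (r a) intS = 0) (hinj : Function.Injective r)
    (c : Fin 3 ↪ OnePoint (ZMod 31)) :
    MvPolynomial.aeval (fun s => r (c s)) signPoly ^ 2 =
      (-31 : ℤ) * (∏ s, aeval (r (c s)) (derivative intS)) ^ 2 := by
  have h := aeval_signRelation_intS fun s => hr (c s)
  rw [aeval_signRelation] at h
  refine sub_eq_zero.1 ((mul_eq_zero.1 h).resolve_left ?_)
  simp [sub_eq_zero, hinj.eq_iff]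

theorem exists_tripleSign_comp (hk : (modulus : k) = 0) (hr : ∀ a, aeval (r a) intS = 0)
    (hφ : ∀ a, φ (r a) = node (pointIndex a)) (g : 𝓞 K →+* 𝓞 K)
    {σ : Equiv.Perm (OnePoint (ZMod 31))} (hσ : ∀ a, g (r a) = r (σ a)) :
    ∃ κ : ℤ, ∀ a b c, tripleSign (σ a) (σ b) (σ c) = κ * tripleSign a b c := by
  have h2 : (2 : k) ≠ 0 := by
    have h2' : Int.gcd 2 modulus = 1 := by decide +kernel
    exact_mod_cast intCast_ne_zero_of_gcd_eq_one hk h2'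
  let u (c : Fin 3 ↪ OnePoint (ZMod 31)) : 𝓞 K := MvPolynomial.aeval (fun s => r (c s)) signPoly
  let v (c : Fin 3 ↪ OnePoint (ZMod 31)) : 𝓞 K := ∏ s, aeval (r (c s)) (derivative intS)
  let π (c : Fin 3 ↪ OnePoint (ZMod 31)) : Fin 3 ↪ OnePoint (ZMod 31) := c.trans σ.toEmbedding
  have huv (c) : u c ^ 2 = (-31 : ℤ) * v c ^ 2 :=
    aeval_signPoly_sq hr (injective_of_map_eq_node hk hφ) c
  have hφv (c) : φ (v c) = ∏ s, aeval (node (pointIndex (c s)) : k) (derivative intS) := by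
    simp only [v, map_prod, map_aeval_polynomial, hφ]
  have hφv_ne (c) : φ (v c) ≠ 0 := by
    rw [hφv]
    exact prod_ne_zero_iff.2 fun s _ => aeval_derivative_node_ne_zero hk _
  have hφu (c) : φ (u c) = sqrtNode * tripleSign (c 0) (c 1) (c 2) * φ (v c) := by
    simp only [u, map_aeval_mvPolynomial, hφ]
    rw [hφv, aeval_signPoly_node hk c]
  have hgu (c) : g (u c) = u (π c) := by
    simp only [u, map_aeval_mvPolynomial, hσ, π, Function.Embedding.trans_apply,
      Equiv.coe_toEmbedding]
  have hgv (c) : g (v c) = v (π c) := by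
    simp only [v, map_prod, map_aeval_polynomial, hσ, π, Function.Embedding.trans_apply,
      Equiv.coe_toEmbedding]
  obtain ⟨κ, hκ⟩ := exists_sign_of_map_eq φ g (π := π)
    (τ := fun c => tripleSign (c 0) (c 1) (c 2)) huv (fun c => tripleSign_sq c.injective)
    hφu hφv_ne (sqrtNode_ne_zero hk) h2 hgu hgv
  refine ⟨κ, fun a b c => ?_⟩
  by_cases hc : Function.Injective ![a, b, c]
  · exact hκ ⟨![a, b, c], hc⟩
  · have h0 : tripleSign a b c = 0 := tripleSign_eq_zero (c := ![a, b, c]) hc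
    have hσ0 : tripleSign (σ a) (σ b) (σ c) = 0 :=
      tripleSign_eq_zero (c := σ ∘ ![a, b, c]) fun h => hc h.of_comp
    rw [h0, hσ0, mul_zero]

end RootNumbering

section RootsInDomains

variable {A ι : Type*} [CommRing A] [IsDomain A] [Fintype ι] {f : ℤ[X]} {r : ι → A}

theorem map_eq_nodal_of_injective (hf : f.Monic) (hinj : Function.Injective r)
    (hr : ∀ a, aeval (r a) f = 0) (hcard : f.natDegree = Fintype.card ι) :
    f.map (Int.castRingHom A) = Lagrange.nodal univ r := by
  have hdeg : (f.map (Int.castRingHom A)).degree = Fintype.card ι := by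
    rw [hf.degree_map, degree_eq_natDegree hf.ne_zero, hcard]
  refine eq_of_degree_le_of_eval_index_eq univ hinj.injOn ?_ ?_ ?_ fun a _ => ?_
  · rw [hdeg, card_univ]
  · rw [hdeg, Lagrange.degree_nodal, card_univ]
  · rw [(hf.map _).leadingCoeff, Lagrange.nodal_monic.leadingCoeff]
  · rw [Lagrange.eval_nodal_at_node (mem_univ a), ← algebraMap_int_eq, eval_map_algebraMap, hr]

theorem exists_eq_of_aeval_eq_zero (hf : f.Monic) (hinj : Function.Injective r)
    (hr : ∀ a, aeval (r a) f = 0) (hcard : f.natDegree = Fintype.card ι) {y : A}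
    (hy : aeval y f = 0) : ∃ a, r a = y := by
  rw [← eval_map_algebraMap, algebraMap_int_eq, map_eq_nodal_of_injective hf hinj hr hcard,
    Lagrange.eval_nodal, prod_eq_zero_iff] at hy
  obtain ⟨a, -, ha⟩ := hy
  exact ⟨a, (sub_eq_zero.1 ha).symm⟩

theorem injective_comp_of_separable_map (hf : f.Monic) (hinj : Function.Injective r)
    (hr : ∀ a, aeval (r a) f = 0) (hcard : f.natDegree = Fintype.card ι) {k : Type*} [Field k]
    (φ : A →+* k) (hsep : (f.map (Int.castRingHom k)).Separable) :
    Function.Injective (φ ∘ r) := by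
  rw [← separable_prod_X_sub_C_iff]
  convert hsep
  rw [← RingHom.eq_intCast' (φ.comp (Int.castRingHom A)), ← Polynomial.map_map,
    map_eq_nodal_of_injective hf hinj hr hcard, Lagrange.nodal, Polynomial.map_prod]
  simp

end RootsInDomains

section FrobeniusPowers

/-- The coefficient of `x ^ j` in the reduction of `x ^ k` by `x ^ d = ∑ i ∈ range d, s i * x ^ i`,
modulo `q`. -/
def powCoeff (q : ℕ) (s : ℕ → ℕ) (d : ℕ) : ℕ → ℕ → ℕ
  | 0, j => if j = 0 then 1 else 0
  | k + 1, 0 => powCoeff q s d k (d - 1) * s 0 % q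
  | k + 1, j + 1 => (powCoeff q s d k j + powCoeff q s d k (d - 1) * s (j + 1)) % q

/-- The coefficient of `x ^ j` in the reduction of `x ^ q ^ m` by
`x ^ d = ∑ i ∈ range d, s i * x ^ i`, modulo the prime `q`. -/
def frobeniusCoeff (q : ℕ) (s : ℕ → ℕ) (d : ℕ) : ℕ → ℕ → ℕ
  | 0, j => powCoeff q s d 1 j
  | m + 1, j => (∑ i ∈ range d, frobeniusCoeff q s d m i * powCoeff q s d (q * i) j) % q

theorem frobeniusCoeff_lt {q : ℕ} (hq : 0 < q) (s : ℕ → ℕ) (d m j : ℕ) :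
    frobeniusCoeff q s d m j < q := by
  cases m <;> cases j <;> exact Nat.mod_lt _ hq

variable {A : Type*} [CommRing A] {q d : ℕ} {s : ℕ → ℕ} {f : ℤ[X]} {x : A}

theorem pow_eq_sum_powCoeff (hqA : (q : A) = 0) (hx : x ^ d = ∑ i ∈ range d, s i * x ^ i)
    (k : ℕ) : x ^ k = ∑ j ∈ range d, powCoeff q s d k j * x ^ j := by
  cases d with
  | zero =>
    have : Subsingleton A := subsingleton_of_zero_eq_one (by simpa using hx.symm)
    exact Subsingleton.elim _ _
  | succ n =>
    induction k with
    | zero => simp [powCoeff]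
    | succ k ih =>
      set y : A := (powCoeff q s (n + 1) k n : A)
      have hy : y * x ^ (n + 1) = y * s 0 + ∑ j ∈ range n, y * s (j + 1) * x ^ (j + 1) := by
        rw [hx, sum_range_succ', mul_add, mul_sum, pow_zero, mul_one, add_comm]
        simp only [mul_assoc]
      calc x ^ (k + 1)
          = ∑ j ∈ range n, powCoeff q s (n + 1) k j * x ^ (j + 1) + y * x ^ (n + 1) := by
            rw [pow_succ, ih, sum_mul, sum_range_succ]
            simp only [mul_assoc, ← pow_succ]
            rfl
        _ = ∑ j ∈ range (n + 1), powCoeff q s (n + 1) (k + 1) j * x ^ j := by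
            rw [hy, sum_range_succ']
            simp only [powCoeff, Nat.add_sub_cancel, natCast_mod_eq hqA, Nat.cast_add,
              Nat.cast_mul, add_mul, sum_add_distrib, pow_zero, mul_one]
            ring

theorem pow_pow_eq_sum_frobeniusCoeff (hq : q.Prime) (hqA : (q : A) = 0)
    (hx : x ^ d = ∑ i ∈ range d, s i * x ^ i) (m : ℕ) :
    x ^ q ^ m = ∑ j ∈ range d, frobeniusCoeff q s d m j * x ^ j := by
  nontriviality A
  have : Fact q.Prime := ⟨hq⟩
  have : CharP A q := (CharP.charP_iff_prime_eq_zero hq).2 hqA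
  induction m with
  | zero => rw [pow_zero, pow_eq_sum_powCoeff hqA hx]; rfl
  | succ m ih =>
    calc x ^ q ^ (m + 1)
        = ∑ i ∈ range d, frobeniusCoeff q s d m i * x ^ (q * i) := by
          rw [pow_succ, pow_mul, ih, ← frobenius_def, map_sum]
          simp only [map_mul, map_natCast, frobenius_def, ← pow_mul, mul_comm]
      _ = ∑ j ∈ range d, frobeniusCoeff q s d (m + 1) j * x ^ j := by
          simp only [pow_eq_sum_powCoeff hqA hx (q * _), frobeniusCoeff, natCast_mod_eq hqA,
            Nat.cast_sum, Nat.cast_mul, mul_sum, sum_mul, ← mul_assoc]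
          exact sum_comm

theorem pow_natDegree_eq_sum (hf : f.Monic) (hs : ∀ i, (s i : A) = (-f.coeff i : ℤ))
    (hx : aeval x f = 0) : x ^ f.natDegree = ∑ i ∈ range f.natDegree, s i * x ^ i := by
  rw [aeval_eq_sum_range, sum_range_succ, hf.coeff_natDegree, one_zsmul] at hx
  simp only [hs, Int.cast_neg, neg_mul, sum_neg_distrib, ← zsmul_eq_mul]
  exact eq_neg_of_add_eq_zero_right hx

theorem separable_map_of_frobeniusCoeff_eq {k : Type*} [Field k] (hq : q.Prime)
    (hk : (q : k) = 0) (hf : f.Monic) (hs : ∀ i, (s i : k) = (-f.coeff i : ℤ)) {m : ℕ}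
    (hm : m ≠ 0) (h : ∀ j ∈ range f.natDegree,
      frobeniusCoeff q s f.natDegree m j = frobeniusCoeff q s f.natDegree 0 j) :
    (f.map (Int.castRingHom k)).Separable := by
  have : CharP k q := (CharP.charP_iff_prime_eq_zero hq).2 hk
  refine (galois_poly_separable q (q ^ m) (dvd_pow_self q hm)).of_dvd
    (AdjoinRoot.mk_eq_zero.1 ?_)
  set x := AdjoinRoot.root (f.map (Int.castRingHom k))
  have hqA : (q : AdjoinRoot (f.map (Int.castRingHom k))) = 0 := by
    rw [← map_natCast (AdjoinRoot.of _), hk, map_zero]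
  have hx : x ^ f.natDegree = ∑ i ∈ range f.natDegree, s i * x ^ i := by
    refine pow_natDegree_eq_sum hf (fun i => ?_) ?_
    · rw [← map_natCast (AdjoinRoot.of _), hs, map_intCast]
    · rw [aeval_def, ← AdjoinRoot.eval₂_root (f.map (Int.castRingHom k)), eval₂_map]
      rfl
  have hpow := pow_pow_eq_sum_frobeniusCoeff hq hqA hx
  rw [map_sub, map_pow, AdjoinRoot.mk_X, sub_eq_zero, hpow m, ← pow_one (AdjoinRoot.root _),
    ← pow_zero q, hpow 0]
  exact sum_congr rfl fun j hj => by rw [h j hj]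

variable {k ι : Type*} [CommRing k] {c : ι → k} {p : Equiv.Perm ι}

theorem apply_perm_pow (hp : ∀ a, c (p a) = c a ^ q) (m : ℕ) (a : ι) :
    c ((p ^ m) a) = c a ^ q ^ m := by
  induction m with
  | zero => simp
  | succ m ih => rw [pow_succ', Equiv.Perm.mul_apply, hp, ih, ← pow_mul, pow_succ]

theorem perm_pow_eq_one_iff [IsDomain k] [Fintype ι] (hq : q.Prime) (hk : (q : k) = 0)
    (hf : f.Monic) (hs : ∀ i, (s i : k) = (-f.coeff i : ℤ)) (hc : Function.Injective c)
    (hroot : ∀ a, aeval (c a) f = 0) (hcard : f.natDegree = Fintype.card ι)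
    (hp : ∀ a, c (p a) = c a ^ q) (m : ℕ) : p ^ m = 1 ↔ ∀ j ∈ range f.natDegree,
      frobeniusCoeff q s f.natDegree m j = frobeniusCoeff q s f.natDegree 0 j := by
  have hpow (n : ℕ) (a : ι) := pow_pow_eq_sum_frobeniusCoeff hq hk
    (pow_natDegree_eq_sum hf hs (hroot a)) n
  have perm_eq_iff : p ^ m = 1 ↔ ∀ a, c a ^ q ^ m = c a ^ q ^ 0 := by
    simp only [Equiv.ext_iff, ← hc.eq_iff, apply_perm_pow hp, pow_zero, pow_one,
      Equiv.Perm.one_apply]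
  rw [perm_eq_iff]
  refine ⟨fun h j hj => ?_, fun h a => ?_⟩
  · have : CharP k q := (CharP.charP_iff_prime_eq_zero hq).2 hk
    let e : Fin f.natDegree ≃ ι := (finCongr hcard).trans (Fintype.equivFin ι).symm
    have coeff_eq := eq_zero_of_forall_index_sum_mul_pow_eq_zero (hc.comp e.injective)
      (v := fun i => (frobeniusCoeff q s f.natDegree m i : k) -
        frobeniusCoeff q s f.natDegree 0 i) fun a => by
        simpa only [Function.comp_apply, hpow, sum_range, sub_mul, sum_sub_distrib, sub_eq_zero]
          using h (e a)
    exact Nat.ModEq.eq_of_lt_of_lt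
      ((CharP.natCast_eq_natCast k q).1 (sub_eq_zero.1 (congrFun coeff_eq ⟨j, mem_range.1 hj⟩)))
      (frobeniusCoeff_lt hq.pos ..) (frobeniusCoeff_lt hq.pos ..)
  · rw [hpow, hpow]
    exact sum_congr rfl fun j hj => by rw [h j hj]

theorem exists_perm_apply_eq_self [IsDomain k] [Fintype ι] (hq : q.Prime) (hk : (q : k) = 0)
    (hf : f.Monic) (hc : Function.Injective c) (hroot : ∀ a, aeval (c a) f = 0)
    (hcard : f.natDegree = Fintype.card ι) (hp : ∀ a, c (p a) = c a ^ q) {n : ℕ}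
    (hn : (q : ℤ) ∣ aeval (n : ℤ) f) : ∃ a, c a = n ∧ p a = a := by
  have : Fact q.Prime := ⟨hq⟩
  have : CharP k q := (CharP.charP_iff_prime_eq_zero hq).2 hk
  have hn0 : aeval (n : k) f = 0 := by
    have := (CharP.intCast_eq_zero_iff k q _).2 hn
    rwa [← eq_intCast (Int.castRingHom k), map_aeval_polynomial, map_natCast] at this
  obtain ⟨a, ha⟩ := exists_eq_of_aeval_eq_zero hf hc hroot hcard hn0
  refine ⟨a, ha, hc ?_⟩
  rw [hp, ha, ← frobenius_def, map_natCast]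

end FrobeniusPowers

section GaloisAction

theorem exists_permHom_of_injective {Γ M ι : Type*} [Group Γ] [MulAction Γ M] {r : ι → M}
    (hinj : Function.Injective r) (hr : ∀ (g : Γ) a, ∃ b, r b = g • r a) :
    ∃ π : Γ →* Equiv.Perm ι, ∀ g a, r (π g a) = g • r a := by
  choose f hf using hr
  let F : Γ →* Function.End ι :=
    { toFun := f
      map_one' := funext fun a => hinj (by rw [hf, one_smul]; rfl)
      map_mul' := fun g h => funext fun a => hinj (by
        rw [hf, mul_smul, ← hf h, ← hf g]; rfl) }
  exact ⟨F.toHomPerm, hf⟩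

theorem aeval_smul_eq_zero {Γ A : Type*} [Monoid Γ] [CommRing A] [MulSemiringAction Γ A]
    {f : ℤ[X]} {x : A} (hx : aeval x f = 0) (g : Γ) : aeval (g • x) f = 0 :=
  aeval_map_eq_zero (MulSemiringAction.toRingHom Γ A g) hx

variable {K : Type*} [Field K] [NumberField K]

section Frobenius

variable [IsGalois ℚ K] {ι : Type*} [Fintype ι] {f : ℤ[X]} {r : ι → 𝓞 K} {q : ℕ} {s : ℕ → ℕ}

theorem exists_frobenius_reduction (hf : f.Monic) (hinj : Function.Injective r)
    (hr : ∀ a, aeval (r a) f = 0) (hcard : f.natDegree = Fintype.card ι) (hq : q.Prime)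
    (hs : ∀ i, s i = natResidue q (-f.coeff i)) {m : ℕ} (hm : m ≠ 0)
    (h : ∀ j ∈ range f.natDegree,
      frobeniusCoeff q s f.natDegree m j = frobeniusCoeff q s f.natDegree 0 j) :
    ∃ (Q : Ideal (𝓞 K)) (g : K ≃ₐ[ℚ] K), Q.IsMaximal ∧ (q : 𝓞 K ⧸ Q) = 0 ∧
      Function.Injective (Ideal.Quotient.mk Q ∘ r) ∧
      ∀ a, Ideal.Quotient.mk Q (g • r a) = Ideal.Quotient.mk Q (r a) ^ q := by
  obtain ⟨Q, hQ, hQq⟩ := exists_maximal_liesOver_span_prime (K := K) hq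
  obtain ⟨g, hg⟩ := exists_frobenius hq Q
  have hk : (q : 𝓞 K ⧸ Q) = 0 := natCast_quotient_eq_zero Q
  have : NeZero q := ⟨hq.ne_zero⟩
  let := Ideal.Quotient.field Q
  have hsep := separable_map_of_frobeniusCoeff_eq hq hk hf
    (fun i => by rw [hs, natCast_natResidue hk]) hm h
  exact ⟨Q, g, hQ, hk, injective_comp_of_separable_map hf hinj hr hcard _ hsep, fun a => hg _⟩

theorem exists_frobenius_perm (hf : f.Monic) (hinj : Function.Injective r)
    (hr : ∀ a, aeval (r a) f = 0) (hcard : f.natDegree = Fintype.card ι)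
    {π : (K ≃ₐ[ℚ] K) →* Equiv.Perm ι} (hπ : ∀ g a, r (π g a) = g • r a) (hq : q.Prime)
    (hs : ∀ i, s i = natResidue q (-f.coeff i)) {m : ℕ} (hm : m ≠ 0)
    (h : ∀ j ∈ range f.natDegree,
      frobeniusCoeff q s f.natDegree m j = frobeniusCoeff q s f.natDegree 0 j) :
    ∃ g, (∀ n, π g ^ n = 1 ↔ ∀ j ∈ range f.natDegree,
        frobeniusCoeff q s f.natDegree n j = frobeniusCoeff q s f.natDegree 0 j) ∧
      ∀ x y : ℕ, (q : ℤ) ∣ aeval (x : ℤ) f → (q : ℤ) ∣ aeval (y : ℤ) f → ¬ x ≡ y [MOD q] →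
        ∃ a b, a ≠ b ∧ π g a = a ∧ π g b = b := by
  obtain ⟨Q, g, hQ, hk, hc, hg⟩ := exists_frobenius_reduction hf hinj hr hcard hq hs hm h
  have hroot (a : ι) : aeval ((Ideal.Quotient.mk Q ∘ r) a) f = 0 := aeval_map_eq_zero _ (hr a)
  have hp (a : ι) : (Ideal.Quotient.mk Q ∘ r) (π g a) = (Ideal.Quotient.mk Q ∘ r) a ^ q := by
    rw [Function.comp_apply, hπ, hg, Function.comp_apply]
  have : NeZero q := ⟨hq.ne_zero⟩
  refine ⟨g, perm_pow_eq_one_iff hq hk hf (fun i => by rw [hs, natCast_natResidue hk]) hc hroot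
    hcard hp, fun x y hx hy hxy => ?_⟩
  obtain ⟨a, hax, ha⟩ := exists_perm_apply_eq_self hq hk hf hc hroot hcard hp hx
  obtain ⟨b, hby, hb⟩ := exists_perm_apply_eq_self hq hk hf hc hroot hcard hp hy
  refine ⟨a, b, ?_, ha, hb⟩
  rintro rfl
  have : CharP (𝓞 K ⧸ Q) q := (CharP.charP_iff_prime_eq_zero hq).2 hk
  exact hxy ((CharP.natCast_eq_natCast _ q).1 (hax.symm.trans hby))

end Frobenius

section RootsOfS

/-- The coefficients `frobeniusCoeff` for the reduction by `S`. -/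
def frobeniusCoeffS (q : ℕ) : ℕ → ℕ → ℕ :=
  frobeniusCoeff q (fun i => natResidue q (-coeffsS.getD i 0)) 32

set_option maxRecDepth 100000 in
theorem frobeniusCoeffS_seventeen :
    (∀ j ∈ range 32, frobeniusCoeffS 17 30 j = frobeniusCoeffS 17 0 j) ∧
      ∀ m ∈ [6, 10, 15], ∃ j ∈ range 32, frobeniusCoeffS 17 m j ≠ frobeniusCoeffS 17 0 j := by
  decide +kernel

set_option maxRecDepth 100000 in
theorem frobeniusCoeffS_oneHundredNine :
    (∀ j ∈ range 32, frobeniusCoeffS 109 31 j = frobeniusCoeffS 109 0 j) ∧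
      ∃ j ∈ range 32, frobeniusCoeffS 109 1 j ≠ frobeniusCoeffS 109 0 j := by
  decide +kernel

theorem natDegree_intS_eq_card : intS.natDegree = Fintype.card (OnePoint (ZMod 31)) := by
  rw [natDegree_intS]
  rfl

theorem aeval_intS_ne_zero (n : ℤ) : aeval n intS ≠ 0 := by
  have not_two_dvd : ∀ x ∈ [0, 1], ¬ (2 : ℤ) ∣ aeval x intS := by
    simp only [aeval_eq_sum_range, natDegree_intS, coeff_intS]
    decide +kernel
  intro hn
  have hmod : n % 2 ∈ [0, 1] := by simpa using Int.emod_two_eq n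
  refine not_two_dvd _ hmod ?_
  have h := (Int.dvd_self_sub_emod (x := n) (m := 2)).trans (sub_dvd_eval_sub n (n % 2) intS)
  rw [coe_aeval_eq_eval] at hn ⊢
  rwa [hn, zero_sub, dvd_neg] at h

variable {r : OnePoint (ZMod 31) → 𝓞 K} {π : (K ≃ₐ[ℚ] K) →* Equiv.Perm (OnePoint (ZMod 31))}

theorem range_permHom_le {k : Type*} [Field k] {φ : 𝓞 K →+* k} (hk : (modulus : k) = 0)
    (hr : ∀ a, aeval (r a) intS = 0) (hφ : ∀ a, φ (r a) = node (pointIndex a))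
    (hπ : ∀ g a, r (π g a) = g • r a) :
    π.range ≤ (MulAction.toPermHom (GL (Fin 2) (ZMod 31)) (OnePoint (ZMod 31))).range := by
  rintro _ ⟨g, rfl⟩
  obtain ⟨κ, hκ⟩ := exists_tripleSign_comp hk hr hφ
    (MulSemiringAction.toRingHom (K ≃ₐ[ℚ] K) (𝓞 K) g) fun a => (hπ g a).symm
  obtain ⟨m, hm⟩ := exists_smul_eq_of_tripleSign_comp (by decide) (π g) κ hκ
  exact ⟨m, Equiv.ext hm⟩

theorem exists_perm_apply_ne [IsGalois ℚ K] (hr : ∀ a, aeval (r a) intS = 0)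
    (hπ : ∀ g a, r (π g a) = g • r a) (a : OnePoint (ZMod 31)) : ∃ g, π g a ≠ a := by
  by_contra! hfix
  obtain ⟨n, hn⟩ := Algebra.IsInvariant.isInvariant (A := ℤ) (G := K ≃ₐ[ℚ] K) (r a) fun g => by
    rw [← hπ, hfix]
  refine aeval_intS_ne_zero n (RingHom.injective_int (algebraMap ℤ (𝓞 K)) ?_)
  rw [map_aeval_polynomial, hn, hr, map_zero]

variable [IsGalois ℚ K]

theorem exists_frobenius_perm_intS (hinj : Function.Injective r) (hr : ∀ a, aeval (r a) intS = 0)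
    (hπ : ∀ g a, r (π g a) = g • r a) {q : ℕ} (hq : q.Prime) {m : ℕ} (hm : m ≠ 0)
    (h : ∀ j ∈ range 32, frobeniusCoeffS q m j = frobeniusCoeffS q 0 j) :
    ∃ g, (∀ n, π g ^ n = 1 ↔ ∀ j ∈ range 32, frobeniusCoeffS q n j = frobeniusCoeffS q 0 j) ∧
      ∀ x y : ℕ, (q : ℤ) ∣ aeval (x : ℤ) intS → (q : ℤ) ∣ aeval (y : ℤ) intS → ¬ x ≡ y [MOD q] →
        ∃ a b, a ≠ b ∧ π g a = a ∧ π g b = b := by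
  have := exists_frobenius_perm (s := fun i => natResidue q (-coeffsS.getD i 0)) monic_intS hinj hr
    natDegree_intS_eq_card hπ hq (fun i => by rw [coeff_intS]) hm
  rw [natDegree_intS] at this
  exact this h

theorem exists_orderOf_perm_eq_thirtyOne (hinj : Function.Injective r)
    (hr : ∀ a, aeval (r a) intS = 0) (hπ : ∀ g a, r (π g a) = g • r a) :
    ∃ g, orderOf (π g) = 31 := by
  obtain ⟨hpow, j, hj, hne⟩ := frobeniusCoeffS_oneHundredNine
  obtain ⟨g, hg, -⟩ := exists_frobenius_perm_intS hinj hr hπ (by norm_num) (by decide) hpow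
  refine ⟨g, orderOf_eq_prime ((hg 31).2 hpow) fun h1 => hne ((hg 1).1 ?_ j hj)⟩
  rw [pow_one, h1]

theorem exists_orderOf_perm_eq_thirty (hinj : Function.Injective r)
    (hr : ∀ a, aeval (r a) intS = 0) (hπ : ∀ g a, r (π g a) = g • r a) :
    ∃ g, orderOf (π g) = 30 ∧ ∃ a b, a ≠ b ∧ π g a = a ∧ π g b = b := by
  obtain ⟨hpow, hne⟩ := frobeniusCoeffS_seventeen
  obtain ⟨g, hg, hfix⟩ := exists_frobenius_perm_intS hinj hr hπ (by norm_num) (by decide) hpow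
  have dvd_aeval : ∀ x ∈ [8, 12], (17 : ℤ) ∣ aeval ((x : ℕ) : ℤ) intS := by
    simp only [aeval_eq_sum_range, natDegree_intS, coeff_intS]
    decide +kernel
  refine ⟨g, orderOf_eq_of_pow_and_pow_div_prime (by decide) ((hg 30).2 hpow)
    fun p hp hdvd h1 => ?_,
    hfix 8 12 (dvd_aeval 8 (by simp)) (dvd_aeval 12 (by simp)) (by decide)⟩
  have prime_divisors : ∀ p ∈ Nat.divisors 30, p.Prime → 30 / p ∈ [6, 10, 15] := by decide
  obtain ⟨j, hj, hne⟩ := hne _ (prime_divisors p (Nat.mem_divisors.2 ⟨hdvd, by decide⟩) hp)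
  exact hne ((hg _).1 h1 j hj)

theorem range_permHom_eq (hinj : Function.Injective r)
    (hr : ∀ a, aeval (r a) intS = 0) (hπ : ∀ g a, r (π g a) = g • r a)
    (hle : π.range ≤ (MulAction.toPermHom (GL (Fin 2) (ZMod 31)) (OnePoint (ZMod 31))).range) :
    π.range = (MulAction.toPermHom (GL (Fin 2) (ZMod 31)) (OnePoint (ZMod 31))).range := by
  obtain ⟨u, hu⟩ := exists_orderOf_perm_eq_thirtyOne hinj hr hπ
  obtain ⟨h, hh, a, b, hab, ha, hb⟩ := exists_orderOf_perm_eq_thirty hinj hr hπ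
  classical
  have two_pretransitive : MulAction.IsMultiplyPretransitive π.range (OnePoint (ZMod 31)) 2 := by
    refine isTwoPretransitive_of_prime_order (p := 31) (by norm_num) rfl (fun c => ?_) ⟨u, rfl⟩ hu
    obtain ⟨g, hg⟩ := exists_perm_apply_ne hr hπ c
    exact ⟨π g, ⟨g, rfl⟩, hg⟩
  refine eq_of_isTwoPretransitive_of_orderOf hle ?_ two_pretransitive ⟨h, rfl⟩ (by rw [hh]; rfl)
    hab ha hb
  rintro _ ⟨m, rfl⟩ a b c hab hbc hac ha hb hc
  exact Equiv.ext (smul_eq_of_fixes_three hab hbc hac ha hb hc)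

end RootsOfS

end GaloisAction

section SplittingField

variable {K : Type*} [Field K] [NumberField K]

theorem map_intS_eq_map_S : intS.map (Int.castRingHom K) = S.map (algebraMap ℚ K) := by
  rw [← map_intS, Polynomial.map_map, RingHom.eq_intCast' (RingHom.comp _ _)]

variable [IsSplittingField ℚ K S]

theorem exists_root_numbering : ∃ (Q : Ideal (𝓞 K)) (r : OnePoint (ZMod 31) → 𝓞 K),
    Q.IsMaximal ∧ (modulus : 𝓞 K ⧸ Q) = 0 ∧ (∀ a, aeval (r a) intS = 0) ∧
      ∀ a, Ideal.Quotient.mk Q (r a) = node (pointIndex a) := by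
  have hs : (intS.map (Int.castRingHom K)).Splits := by
    rw [map_intS_eq_map_S]
    exact IsSplittingField.splits K S
  obtain ⟨Q, hQ, hQp⟩ := exists_maximal_liesOver_span_prime (K := K) prime_splitPrime
  have hk : (modulus : 𝓞 K ⧸ Q) = 0 := by
    rw [modulus, Nat.cast_pow, natCast_quotient_eq_zero Q, zero_pow (by decide)]
  choose r hr hφ using fun a =>
    exists_root_map_eq monic_intS hs (Ideal.Quotient.mk Q) (aeval_node hk a)
  exact ⟨Q, r, hQ, hk, hr, hφ⟩

variable {r : OnePoint (ZMod 31) → 𝓞 K} {π : (K ≃ₐ[ℚ] K) →* Equiv.Perm (OnePoint (ZMod 31))}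

theorem permHom_injective (hinj : Function.Injective r) (hr : ∀ a, aeval (r a) intS = 0)
    (hπ : ∀ g a, r (π g a) = g • r a) : Function.Injective π := by
  refine (injective_iff_map_eq_one π).2 fun g hg => ?_
  have fixes_roots : ∀ x ∈ S.rootSet K, (g : K →ₐ[ℚ] K) x = AlgHom.id ℚ K x := by
    intro x hx
    have hx0 : aeval x intS = 0 := by
      rw [← eval_map_algebraMap, algebraMap_int_eq, map_intS_eq_map_S, eval_map_algebraMap]
      exact (mem_rootSet'.1 hx).2
    let y : 𝓞 K := ⟨x, intS, monic_intS, hx0⟩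
    have hy : aeval y intS = 0 := by
      refine RingOfIntegers.coe_injective ?_
      rw [map_aeval_polynomial, map_zero]
      exact hx0
    obtain ⟨a, ha⟩ := exists_eq_of_aeval_eq_zero monic_intS hinj hr natDegree_intS_eq_card hy
    have hgy : g • y = y := by rw [← ha, ← hπ, hg, Equiv.Perm.one_apply]
    exact congrArg (algebraMap (𝓞 K) K) hgy
  exact AlgEquiv.coe_toAlgHom_injective
    (AlgHom.ext_of_adjoin_eq_top (IsSplittingField.adjoin_rootSet K S) fixes_roots)

end SplittingField

theorem nonempty_algEquiv_mulEquiv_pgl (K : Type*) [Field K] [inst : Algebra ℚ K]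
    [IsSplittingField ℚ K S] : Nonempty ((K ≃ₐ[ℚ] K) ≃*
      GL (Fin 2) (ZMod 31) ⧸ Subgroup.center (GL (Fin 2) (ZMod 31))) := by
  have : CharZero K := algebraRat.charZero K
  obtain rfl : inst = DivisionRing.toRatAlgebra := Subsingleton.elim _ _
  have : NumberField K := { to_finiteDimensional := IsSplittingField.finiteDimensional K S }
  have : Normal ℚ K := Normal.of_isSplittingField S
  have : IsGalois ℚ K := ⟨⟩
  obtain ⟨Q, r, hQ, hk, hr, hφ⟩ := exists_root_numbering (K := K)
  let := Ideal.Quotient.field Q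
  have hinj : Function.Injective r := injective_of_map_eq_node hk hφ
  obtain ⟨π, hπ⟩ := exists_permHom_of_injective hinj fun (g : K ≃ₐ[ℚ] K) a =>
    exists_eq_of_aeval_eq_zero monic_intS hinj hr natDegree_intS_eq_card
      (aeval_smul_eq_zero (hr a) g)
  have range_eq := range_permHom_eq hinj hr hπ (range_permHom_le hk hr hφ hπ)
  exact ⟨(MonoidHom.ofInjective (permHom_injective hinj hr hπ)).trans <|
    (MulEquiv.subgroupCongr range_eq).trans <|
    (QuotientGroup.quotientKerEquivRange _).symm.trans <|
    QuotientGroup.quotientMulEquivOfEq ker_toPermHom_onePoint⟩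

end

theorem galoisGroup_S :
    Nonempty (S.Gal ≃*
      GL (Fin 2) (ZMod 31) ⧸ Subgroup.center (GL (Fin 2) (ZMod 31))) := by
  exact @nonempty_algEquiv_mulEquiv_pgl S.SplittingField _ _ (IsSplittingField.splittingField S)
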